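/- arXiv:1410.3166 — 3 statements merged into one kernel-verified Lean document; each statement's English description precedes it below -/
import Mathlib

section
/- Assume r ≥ 2 and let d be an integer with d > L+1. For a tuple (d_0,…,d_L) ∈ ℕ^{L+1} with d_0 + ⋯ + d_L = d, the following are equivalent: (i) d_l ≤ r·d_{l-1} and d_{l-1} ≤ r·d_l for every l ∈ {1,…,L}; (ii) there exists a finite-dimensional Λ-module M with rad(M) = (d_0,…,d_L) such that the pair (rad(M), socseq(M)) is a minimal element of rad-soc(d), i.e., every finite-dimensional Λ-module N with dim_K N = d, rad(N) ≼ rad(M) and socseq(N) ≼ socseq(M) satisfies rad(N) = rad(M) and socseq(N) = socseq(M). -/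
noncomputable section

/-- The relation on the free algebra killing all products of `L+1` generators. -/
def TruncRel (K : Type*) [Field K] (r L : ℕ) :
    FreeAlgebra K (Fin r) → FreeAlgebra K (Fin r) → Prop := fun a b =>
  (∃ f : Fin (L + 1) → Fin r, a = (List.ofFn fun j => FreeAlgebra.ι K (f j)).prod) ∧ b = 0

/-- The local truncated path algebra with `r` loops and Loewy length `L+1`:
the quotient of `K⟨X_1,…,X_r⟩` by the two-sided ideal generated by all products
of `L+1` generators. -/
def TruncAlg (K : Type*) [Field K] (r L : ℕ) : Type _ := RingQuot (TruncRel K r L)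

instance (K : Type*) [Field K] (r L : ℕ) : Ring (TruncAlg K r L) :=
  inferInstanceAs (Ring (RingQuot _))

instance (K : Type*) [Field K] (r L : ℕ) : Algebra K (TruncAlg K r L) :=
  inferInstanceAs (Algebra K (RingQuot _))

/-- The images of the generators `X i` in the truncated algebra. -/
def gen (K : Type*) [Field K] (r L : ℕ) (i : Fin r) : TruncAlg K r L :=
  RingQuot.mkAlgHom K (TruncRel K r L) (FreeAlgebra.ι K i)

/-- The two-sided ideal `J` of `Λ` generated by the images of `X_1,…,X_r`,
realized as a `K`-submodule of `Λ`. -/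
def Jrad (K : Type*) [Field K] (r L : ℕ) : Submodule K (TruncAlg K r L) :=
  ⊤ * Submodule.span K (Set.range (gen K r L)) * ⊤

/-- `J^l M`, the submodule of `M` given by the action of `J^l`. -/
def jpow (K : Type*) [Field K] (r L : ℕ) (M : Type*) [AddCommGroup M] [Module K M]
    [Module (TruncAlg K r L) M] [IsScalarTower K (TruncAlg K r L) M] (l : ℕ) :
    Submodule (TruncAlg K r L) M :=
  Submodule.span (TruncAlg K r L)
    {x : M | ∃ a ∈ (Jrad K r L ^ l : Submodule K (TruncAlg K r L)), ∃ m : M, x = a • m}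

/-- The socle of a module: the supremum of all simple submodules. -/
def socle (R N : Type*) [Ring R] [AddCommGroup N] [Module R N] : Submodule R N :=
  sSup {p : Submodule R N | IsSimpleModule R ↥p}

/-- The socle series: `socSeries R M l` is `soc_{l-1} M`, so `socSeries R M 0 = soc_{-1} M = ⊥`
and `socSeries R M (l+1) = soc_l M` is the preimage in `M` of `soc (M / soc_{l-1} M)`. -/
def socSeries (R M : Type*) [Ring R] [AddCommGroup M] [Module R M] : ℕ → Submodule R M
  | 0 => ⊥
  | l + 1 => Submodule.comap (socSeries R M l).mkQ (socle R (M ⧸ socSeries R M l))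

/-- Dimension of the subquotient `q / (p ⊓ q)`; for `p ≤ q` this is `dim (q/p)`. -/
def quotDim (K M : Type*) [Field K] [AddCommGroup M] [Module K M]
    (p q : Submodule K M) : ℕ :=
  Module.finrank K (↥q ⧸ Submodule.comap q.subtype p)

/-- The radical layering `rad(M) = (dim_K J^l M / J^{l+1} M)_{l=0,…,L}`. -/
def radLayering (K : Type*) [Field K] (r L : ℕ) (M : Type*) [AddCommGroup M] [Module K M]
    [Module (TruncAlg K r L) M] [IsScalarTower K (TruncAlg K r L) M] : Fin (L + 1) → ℕ :=
  fun l => quotDim K M ((jpow K r L M ((l : ℕ) + 1)).restrictScalars K)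
    ((jpow K r L M (l : ℕ)).restrictScalars K)

/-- The socle layering `socseq(M) = (dim_K soc_l M / soc_{l-1} M)_{l=0,…,L}`. -/
def socLayering (K : Type*) [Field K] (r L : ℕ) (M : Type*) [AddCommGroup M] [Module K M]
    [Module (TruncAlg K r L) M] [IsScalarTower K (TruncAlg K r L) M] : Fin (L + 1) → ℕ :=
  fun l => quotDim K M ((socSeries (TruncAlg K r L) M (l : ℕ)).restrictScalars K)
    ((socSeries (TruncAlg K r L) M ((l : ℕ) + 1)).restrictScalars K)

/-- The dominance order on `ℕ^{L+1}`: `a ≼ b` iff all partial sums satisfy `≤`. -/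
def DomLE (L : ℕ) (a b : Fin (L + 1) → ℕ) : Prop :=
  ∀ l : Fin (L + 1), ∑ j ∈ Finset.Iic l, a j ≤ ∑ j ∈ Finset.Iic l, b j

/-- `reverse (a_0, …, a_L) = (a_L, …, a_0)`. -/
def revTuple (L : ℕ) (a : Fin (L + 1) → ℕ) : Fin (L + 1) → ℕ := fun l => a l.rev


/-! ### Combinatorics -/

lemma comb_move (L : ℕ) (B : ℕ → ℤ) (p q : ℕ) (hpq : p < q) (hq : q ≤ L) (e : ℤ) (he : e * e = 1)
    (h : 2 ≤ e * ((B (q+1) - B q) - (B (p+1) - B p))) :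
    ∑ k ∈ Finset.range (L+1), ((B (k+1) + (if p < k+1 ∧ k+1 ≤ q then e else 0))
        - (B k + (if p < k ∧ k ≤ q then e else 0)))^2
      < ∑ k ∈ Finset.range (L+1), (B (k+1) - B k)^2 := by
  have key : ∀ k ∈ Finset.range (L+1), ((B (k+1) + (if p < k+1 ∧ k+1 ≤ q then e else 0))
        - (B k + (if p < k ∧ k ≤ q then e else 0)))^2
      = (B (k+1) - B k)^2 + (if k = p then 2 * e * (B (p+1) - B p) + 1 else 0)
        + (if k = q then 1 - 2 * e * (B (q+1) - B q) else 0) := by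
    intro k _
    by_cases h1 : k = p
    · subst h1
      rw [if_pos (by omega), if_neg (by omega), if_pos rfl, if_neg (by omega)]
      linear_combination he
    · by_cases h2 : k = q
      · subst h2
        rw [if_neg (by omega), if_pos (by omega), if_neg h1, if_pos rfl]
        linear_combination he
      · rw [if_neg h1, if_neg h2]
        by_cases h3 : p < k ∧ k ≤ q
        · rw [if_pos h3, if_pos (by omega)]; ring
        · rw [if_neg h3, if_neg (by omega)]; ring
  rw [Finset.sum_congr rfl key, Finset.sum_add_distrib, Finset.sum_add_distrib,
    Finset.sum_ite_eq', Finset.sum_ite_eq', if_pos (by simp; omega), if_pos (by simp; omega)]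
  linarith

lemma exists_closest (P Q : ℕ → Prop) (L i j : ℕ) (hij : i < j) (hj : j ≤ L) (hP : P i) (hQ : Q j)  :
    ∃ i' j', i' < j' ∧ j' ≤ L ∧ P i' ∧ Q j' ∧ ∀ k, i' < k → k < j' → ¬ P k ∧ ¬ Q k := by
  induction' h : j - i using Nat.strong_induction_on with n ih generalizing i j
  by_cases hk : ∀ k, i < k → k < j → ¬ P k ∧ ¬ Q k
  · exact ⟨i, j, hij, hj, hP, hQ, hk⟩
  · push Not at hk
    obtain ⟨k, h1, h2, h3⟩ := hk
    by_cases hPk : P k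
    · exact ih (j - k) (by omega) k j h2 hj hPk hQ rfl
    · exact ih (k - i) (by omega) i k h1 (by omega) hP (h3 hPk) rfl

lemma comb (r L : ℕ) (hr : 2 ≤ r) (d : ℕ) (hd : L + 1 < d) (A C : ℕ → ℤ)
    (hCA : ∀ k ≤ L + 1, C k ≤ A k) (hA0 : A 0 = 0) (hC0 : C 0 = 0) (hA1 : A (L+1) = d)
    (hC1 : C (L+1) = d) (hAm : ∀ k ≤ L, A k ≤ A (k+1))
    (hA : ∀ k < L, A (k+2) - A (k+1) ≤ r * (A (k+1) - A k))
    (hC : ∀ k < L, C (k+1) - C k ≤ r * (C (k+2) - C (k+1))) :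
    ∃ B : ℕ → ℤ, B 0 = 0 ∧ B (L+1) = d ∧ (∀ k ≤ L + 1, C k ≤ B k ∧ B k ≤ A k) ∧
      (∀ k ≤ L, B k ≤ B (k+1)) ∧
      (∀ k < L, B (k+2) - B (k+1) ≤ r * (B (k+1) - B k) ∧
        B (k+1) - B k ≤ r * (B (k+2) - B (k+1))) := by
  have hr' : (2:ℤ) ≤ r := by exact_mod_cast hr
  let F : (ℕ → ℤ) → Prop := fun B => (∀ k ≤ L + 1, C k ≤ B k ∧ B k ≤ A k) ∧
      (∀ k ≤ L, B k ≤ B (k+1))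
  let φ : (ℕ → ℤ) → ℤ := fun B => ∑ k ∈ Finset.range (L+1), (B (k+1) - B k)^2
  have hφ : ∀ B, 0 ≤ φ B := fun B => Finset.sum_nonneg (fun k _ => sq_nonneg _)
  obtain ⟨B, hBF, hmin⟩ : ∃ B, F B ∧ ∀ B', F B' → φ B ≤ φ B' := by
    have hne : ∃ n : ℕ, ∃ B, F B ∧ (φ B).toNat = n :=
      ⟨_, A, ⟨fun k hk => ⟨hCA k hk, le_rfl⟩, hAm⟩, rfl⟩
    classical
    obtain ⟨B, hB, hn⟩ := Nat.find_spec hne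
    refine ⟨B, hB, fun B' hB' => ?_⟩
    have := Nat.find_min' hne ⟨B', hB', rfl⟩
    rw [← hn] at this
    have h1 := hφ B
    have h2 := hφ B'
    omega
  obtain ⟨hB1, hBm⟩ := hBF
  have hB0 : B 0 = 0 := by have := hB1 0 (by omega); omega
  have hBL : B (L+1) = d := by have := hB1 (L+1) (by omega); omega
  -- moves
  have mvA : ∀ p q, p < q → q ≤ L → 2 ≤ (B (q+1) - B q) - (B (p+1) - B p) →
      ∃ k, p < k ∧ k ≤ q ∧ B k = A k := by
    intro p q hpq hq h2
    by_contra hcon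
    push Not at hcon
    have hlt := comb_move L B p q hpq hq 1 (by norm_num) (by linarith)
    refine absurd (hmin (fun k => B k + (if p < k ∧ k ≤ q then 1 else 0)) ⟨?_, ?_⟩) (not_le.mpr hlt)
    · intro k hk
      have := hB1 k hk
      dsimp only
      split_ifs with h
      · have := hcon k h.1 h.2; omega
      · omega
    · intro k hk
      have h3 := hBm k hk
      have h4 := hBm p (by omega)
      dsimp only
      by_cases hkq : k = q
      · subst hkq; split_ifs <;> omega
      · split_ifs <;> omega
  have mvC : ∀ p q, p < q → q ≤ L → 2 ≤ (B (p+1) - B p) - (B (q+1) - B q) →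
      ∃ k, p < k ∧ k ≤ q ∧ B k = C k := by
    intro p q hpq hq h2
    by_contra hcon
    push Not at hcon
    have hlt := comb_move L B p q hpq hq (-1) (by norm_num) (by linarith)
    refine absurd (hmin (fun k => B k + (if p < k ∧ k ≤ q then (-1) else 0)) ⟨?_, ?_⟩) (not_le.mpr hlt)
    · intro k hk
      have := hB1 k hk
      dsimp only
      split_ifs with h
      · have := hcon k h.1 h.2; omega
      · omega
    · intro k hk
      have h3 := hBm k hk
      have h4 := hBm q (by omega)
      dsimp only
      by_cases hkq : k = p
      · subst hkq; split_ifs <;> omega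
      · split_ifs <;> omega
  -- tight points
  have tA : ∀ k < L, B (k+1) = A (k+1) → B (k+2) - B (k+1) ≤ r * (B (k+1) - B k) := by
    intro k hk h
    have h1 := hB1 k (by omega)
    have h2 := hB1 (k+2) (by omega)
    have h3 := hA k hk
    nlinarith
  have tC : ∀ k < L, B (k+1) = C (k+1) → B (k+1) - B k ≤ r * (B (k+2) - B (k+1)) := by
    intro k hk h
    have h1 := hB1 k (by omega)
    have h2 := hB1 (k+2) (by omega)
    have h3 := hC k hk
    nlinarith
  -- no zeros
  have nz : ∀ k ≤ L, B (k+1) - B k ≠ 0 := by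
    intro i hi h0
    -- some jump ≥ 2
    have hj : ∃ j ≤ L, 2 ≤ B (j+1) - B j := by
      by_contra hcon
      push Not at hcon
      have : ∀ m ≤ L + 1, B m ≤ m := by
        intro m
        induction m with
        | zero => intro _; simp [hB0]
        | succ m ih =>
          intro hm
          have := ih (by omega)
          have := hcon m (by omega)
          push_cast; omega
      have := this (L+1) le_rfl
      rw [hBL] at this
      omega
    obtain ⟨j, hjL, hj⟩ := hj
    have hij : i ≠ j := by rintro rfl; omega
    rcases lt_or_gt_of_ne hij with hlt | hlt
    · obtain ⟨i, j, hij, hjL, h0, hj, hbt⟩ := exists_closest (fun k => B (k+1) - B k = 0)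
        (fun k => 2 ≤ B (k+1) - B k) L i j hlt hjL h0 hj
      obtain ⟨k, hk1, hk2, hk⟩ := mvA i j hij hjL (by omega)
      have down : ∀ n, ∀ k, i < k → k ≤ j → k = i + 1 + n → B k = A k → False := by
        intro n
        induction n with
        | zero =>
          intro k _ _ hkn hk
          subst hkn
          have h1 : B (i+1+1) - B (i+1) ≤ _ := tA i (by omega) hk
          have h2 := hBm (i+1) (by omega)
          rw [h0] at h1
          by_cases hh : i + 1 = j
          · subst hh; simp at h1; omega
          · have := hbt (i+1) (by omega) (by omega)
            simp at h1; omega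
        | succ n ih =>
          intro k hk1 hk2 hkn hk
          obtain ⟨m, rfl⟩ : ∃ m, k = m + 1 := ⟨k - 1, by omega⟩
          refine ih m (by omega) (by omega) (by omega) ?_
          have h1 := hbt m (by omega) (by omega)
          have h2 := hBm m (by omega)
          have h3 := hBm (m+1) (by omega)
          have h4 : 1 ≤ B (m+2) - B (m+1) := by
            by_cases hh : m + 1 = j
            · subst hh; linarith
            · have := hbt (m+1) (by omega) (by omega)
              simp only [add_assoc, Nat.reduceAdd] at this h3; omega
          have h5 := hB1 (m+2) (by omega)
          have h6 := hB1 m (by omega)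
          have h7 := hA m (by omega)
          have h8 : 0 < A (m+1) - A m := by
            by_contra hc
            push Not at hc
            nlinarith
          omega
      exact down (k - (i+1)) k hk1 hk2 (by omega) hk
    · obtain ⟨j, i, hij, hjL, hj, h0, hbt⟩ := exists_closest (fun k => 2 ≤ B (k+1) - B k)
        (fun k => B (k+1) - B k = 0) L j i hlt hi hj h0
      obtain ⟨k, hk1, hk2, hk⟩ := mvC j i hij hjL (by omega)
      have up : ∀ n, ∀ k, j < k → k ≤ i → k + n = i → B k = C k → False := by
        intro n
        induction n with
        | zero =>
          intro k hk1 _ hkn hk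
          obtain ⟨m, rfl⟩ : ∃ m, k = m + 1 := ⟨k - 1, by omega⟩
          simp only [add_zero] at hkn
          subst hkn
          have h1 := tC m (by omega) hk
          have h2 := hBm m (by omega)
          rw [show B (m+2) - B (m+1) = 0 from h0] at h1
          by_cases hh : m = j
          · subst hh; simp at h1; omega
          · have := hbt m (by omega) (by omega)
            simp at h1; omega
        | succ n ih =>
          intro k hk1 hk2 hkn hk
          obtain ⟨m, rfl⟩ : ∃ m, k = m + 1 := ⟨k - 1, by omega⟩
          refine ih (m+2) (by omega) (by omega) (by omega) ?_
          have h1 := hbt (m+1) (by omega) (by omega)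
          have h2 := hBm m (by omega)
          have h3 := hBm (m+1) (by omega)
          simp only [add_assoc, Nat.reduceAdd] at h1 h3
          have h4 : 1 ≤ B (m+1) - B m := by
            by_cases hh : m = j
            · subst hh; linarith
            · have := hbt m (by omega) (by omega)
              omega
          have h5 := hB1 (m+2) (by omega)
          have h6 := hB1 m (by omega)
          have h7 := hC m (by omega)
          have h8 : 0 < C (m+2) - C (m+1) := by
            by_contra hc
            push Not at hc
            nlinarith
          omega
      exact up (i - k) k hk1 hk2 (by omega) hk
  refine ⟨B, hB0, hBL, hB1, hBm, fun k hk => ⟨?_, ?_⟩⟩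
  · by_contra hcon
    push Not at hcon
    have h1 := nz k (by omega)
    have h2 := hBm k (by omega)
    have h3 : 1 ≤ B (k+1) - B k := by omega
    obtain ⟨m, hm1, hm2, hm⟩ := mvA k (k+1) (by omega) (by omega)
      (by simp only [add_assoc, Nat.reduceAdd]; nlinarith)
    obtain rfl : m = k + 1 := by omega
    have := tA k hk hm
    omega
  · by_contra hcon
    push Not at hcon
    have h1 := nz (k+1) (by omega)
    have h2 := hBm (k+1) (by omega)
    simp only [add_assoc, Nat.reduceAdd] at h1 h2
    have h3 : 1 ≤ B (k+2) - B (k+1) := by omega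
    obtain ⟨m, hm1, hm2, hm⟩ := mvC k (k+1) (by omega) (by omega)
      (by simp only [add_assoc, Nat.reduceAdd]; nlinarith)
    obtain rfl : m = k + 1 := by omega
    have := tC k hk hm
    omega

/-! ### Linear algebra of an `r`-tuple of endomorphisms -/

section LinAlg

variable {K M : Type*} [Field K] [AddCommGroup M] [Module K M] {r : ℕ}

def upS (X : Fin r → M →ₗ[K] M) (P : Submodule K M) : Submodule K M := ⨆ i, P.map (X i)
def dnS (X : Fin r → M →ₗ[K] M) (P : Submodule K M) : Submodule K M := ⨅ i, P.comap (X i)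

def Rs (X : Fin r → M →ₗ[K] M) : ℕ → Submodule K M
  | 0 => ⊤
  | l + 1 => upS X (Rs X l)

def Ss (X : Fin r → M →ₗ[K] M) : ℕ → Submodule K M
  | 0 => ⊥
  | l + 1 => dnS X (Ss X l)

lemma upS_mono (X : Fin r → M →ₗ[K] M) {P Q : Submodule K M} (h : P ≤ Q) : upS X P ≤ upS X Q :=
  iSup_mono fun _ => Submodule.map_mono h

lemma dnS_mono (X : Fin r → M →ₗ[K] M) {P Q : Submodule K M} (h : P ≤ Q) : dnS X P ≤ dnS X Q :=
  iInf_mono fun _ => Submodule.comap_mono h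

lemma mem_dnS (X : Fin r → M →ₗ[K] M) {P : Submodule K M} {x : M} :
    x ∈ dnS X P ↔ ∀ i, X i x ∈ P := by simp [dnS]

lemma mem_upS (X : Fin r → M →ₗ[K] M) {P : Submodule K M} {x : M} (hx : x ∈ P) (i : Fin r) :
    X i x ∈ upS X P := Submodule.mem_iSup_of_mem i (Submodule.mem_map_of_mem hx)

lemma upS_le (X : Fin r → M →ₗ[K] M) {P Q : Submodule K M} (h : ∀ i, ∀ x ∈ P, X i x ∈ Q) :
    upS X P ≤ Q := iSup_le fun i => Submodule.map_le_iff_le_comap.mpr (h i)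

lemma Rs_succ_le (X : Fin r → M →ₗ[K] M) (l : ℕ) : Rs X (l+1) ≤ Rs X l := by
  induction l with
  | zero => exact le_top
  | succ l ih => exact upS_mono X ih

lemma Ss_le_succ (X : Fin r → M →ₗ[K] M) (l : ℕ) : Ss X l ≤ Ss X (l+1) := by
  induction l with
  | zero => exact bot_le
  | succ l ih => exact dnS_mono X ih

lemma Rs_le_Ss (X : Fin r → M →ₗ[K] M) (L : ℕ) (h : Rs X (L+1) = ⊥) (k : ℕ) (hk : k ≤ L + 1) :
    Rs X (L + 1 - k) ≤ Ss X k := by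
  induction k with
  | zero => simp [h, Ss]
  | succ k ih =>
    intro x hx
    refine (mem_dnS X).mpr fun i => ih (by omega) ?_
    have := mem_upS X hx i
    rw [show L + 1 - k = (L + 1 - (k+1)) + 1 by omega]
    exact this

variable [FiniteDimensional K M]

lemma finrank_dnS (X : Fin r → M →ₗ[K] M) {P Q : Submodule K M} (h : P ≤ Q) :
    Module.finrank K (dnS X Q) + r * Module.finrank K P ≤
      Module.finrank K (dnS X P) + r * Module.finrank K Q := by
  let Q' := Q.map P.mkQ
  have hQ' : Module.finrank K Q' + Module.finrank K P = Module.finrank K Q := by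
    have h1 := LinearMap.finrank_range_add_finrank_ker (P.mkQ.domRestrict Q)
    rw [LinearMap.range_domRestrict, LinearMap.ker_domRestrict, Submodule.ker_mkQ] at h1
    rw [← h1]
    congr 1
    exact (Submodule.submoduleOfEquivOfLe h).finrank_eq.symm
  let f : dnS X Q →ₗ[K] (Fin r → Q') :=
    LinearMap.pi fun i => (P.mkQ ∘ₗ X i).restrict (p := dnS X Q) (q := Q')
      fun x hx => Submodule.mem_map_of_mem ((mem_dnS X).mp hx i)
  have hk : LinearMap.ker f = (dnS X P).submoduleOf (dnS X Q) := by
    ext ⟨x, hx⟩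
    simp [f, funext_iff, Submodule.submoduleOf, mem_dnS, Subtype.ext_iff, LinearMap.restrict_apply]
  have h1 := LinearMap.finrank_range_add_finrank_ker f
  have h2 : Module.finrank K (LinearMap.range f) ≤ r * Module.finrank K Q' := by
    refine (Submodule.finrank_le _).trans ?_
    rw [Module.finrank_pi_fintype]; simp
  rw [hk, (Submodule.submoduleOfEquivOfLe (dnS_mono X h)).finrank_eq] at h1
  rw [← hQ']
  nlinarith

lemma finrank_upS (X : Fin r → M →ₗ[K] M) {P Q : Submodule K M} (h : P ≤ Q) :
    Module.finrank K (upS X Q) + r * Module.finrank K P ≤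
      Module.finrank K (upS X P) + r * Module.finrank K Q := by
  obtain ⟨U0, hU0⟩ := Submodule.exists_isCompl P
  let U := U0 ⊓ Q
  have hsup : P ⊔ U = Q := by
    rw [← sup_inf_assoc_of_le _ h, hU0.sup_eq_top, top_inf_eq]
  have hinf : P ⊓ U = ⊥ := by
    rw [← inf_assoc, hU0.inf_eq_bot, bot_inf_eq]
  have hdim : Module.finrank K P + Module.finrank K U = Module.finrank K Q := by
    have := Submodule.finrank_sup_add_finrank_inf_eq P U
    rw [hsup, hinf, finrank_bot] at this
    omega
  let f : (upS X P × (Fin r → U)) →ₗ[K] M :=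
    LinearMap.coprod (upS X P).subtype (∑ i, X i ∘ₗ U.subtype ∘ₗ LinearMap.proj i)
  have hle : upS X Q ≤ LinearMap.range f := by
    refine upS_le X fun i x hx => ?_
    rw [← hsup] at hx
    obtain ⟨p, hp, u, hu, rfl⟩ := Submodule.mem_sup.mp hx
    refine ⟨(⟨X i p, mem_upS X hp i⟩, Pi.single i ⟨u, hu⟩), ?_⟩
    simp only [f, LinearMap.coprod_apply, Submodule.subtype_apply, LinearMap.sum_apply,
      LinearMap.comp_apply, LinearMap.proj_apply, map_add]
    congr 1
    rw [Finset.sum_eq_single i]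
    · simp
    · intro j _ hj; simp [Pi.single_eq_of_ne hj]
    · simp
  have h1 := Submodule.finrank_mono hle
  have h2 := LinearMap.finrank_range_le f
  rw [Module.finrank_prod, Module.finrank_pi_fintype] at h2
  simp at h2
  rw [← hdim]
  nlinarith

lemma quotDim_add {P Q : Submodule K M} (h : P ≤ Q) :
    quotDim K M P Q + Module.finrank K P = Module.finrank K Q := by
  have := Submodule.finrank_quotient_add_finrank (P.submoduleOf Q)
  rw [(Submodule.submoduleOfEquivOfLe h).finrank_eq] at this
  exact this

end LinAlg

/-! ### Modules over the truncated algebra -/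

section Mods

variable {K : Type*} [Field K] {r L : ℕ}

lemma trunc_induction {P : TruncAlg K r L → Prop} (hK : ∀ k : K, P (algebraMap K _ k))
    (hX : ∀ i, P (gen K r L i)) (hmul : ∀ a b, P a → P b → P (a * b))
    (hadd : ∀ a b, P a → P b → P (a + b)) (a : TruncAlg K r L) : P a := by
  obtain ⟨a, rfl⟩ := RingQuot.mkAlgHom_surjective K (TruncRel K r L) a
  induction a using FreeAlgebra.induction with
  | grade0 k =>
    rw [AlgHom.commutes]; exact hK k
  | grade1 i => exact hX i
  | mul a b ha hb => rw [map_mul]; exact hmul _ _ ha hb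
  | add a b ha hb => rw [map_add]; exact hadd _ _ ha hb

lemma word_zero (w : List (Fin r)) (hw : w.length = L + 1) :
    (w.map (gen K r L)).prod = 0 := by
  have h : TruncRel K r L ((w.map (FreeAlgebra.ι K)).prod) 0 := by
    refine ⟨⟨fun j => w.get (j.cast hw.symm), ?_⟩, rfl⟩
    congr 1
    apply List.ext_get
    · simp [hw]
    · intro n h1 h2
      simp only [List.get_eq_getElem, List.getElem_ofFn, List.getElem_map, Fin.val_cast]
  have h2 := RingQuot.mkAlgHom_rel K h
  rw [map_zero, map_list_prod, List.map_map] at h2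
  exact h2

variable {M : Type*} [AddCommGroup M] [Module K M]
    [Module (TruncAlg K r L) M] [IsScalarTower K (TruncAlg K r L) M]

variable (K r L M) in
def act (i : Fin r) : M →ₗ[K] M := Algebra.lsmul K K M (gen K r L i)

lemma act_apply (i : Fin r) (m : M) : act K r L M i m = gen K r L i • m := rfl

/-- stable K-subspaces -/
lemma stable_smul (P : Submodule K M) (h : ∀ i, ∀ x ∈ P, gen K r L i • x ∈ P)
    (a : TruncAlg K r L) : ∀ x ∈ P, a • x ∈ P := by
  induction a using trunc_induction with
  | hK k => intro x hx; rw [algebraMap_smul]; exact P.smul_mem k hx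
  | hX i => exact h i
  | hmul a b ha hb => intro x hx; rw [mul_smul]; exact ha _ (hb _ hx)
  | hadd a b ha hb => intro x hx; rw [add_smul]; exact P.add_mem (ha _ hx) (hb _ hx)

def ofStable (P : Submodule K M) (h : ∀ i, ∀ x ∈ P, gen K r L i • x ∈ P) :
    Submodule (TruncAlg K r L) M :=
  { P with smul_mem' := fun a x hx => stable_smul P h a x hx }

lemma Rs_stable (l : ℕ) (i : Fin r) (x : M) (hx : x ∈ Rs (act K r L M) l) :
    gen K r L i • x ∈ Rs (act K r L M) l :=
  Rs_succ_le _ l (mem_upS (act K r L M) hx i)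

lemma J_mul (a b : TruncAlg K r L) (ha : a ∈ Jrad K r L) : a * b ∈ Jrad K r L := by
  have : Jrad K r L * ⊤ ≤ Jrad K r L := by
    unfold Jrad
    rw [mul_assoc _ (⊤ : Submodule K (TruncAlg K r L)) ⊤]
    exact mul_le_mul' le_rfl le_top
  exact this (Submodule.mul_mem_mul ha trivial)

lemma gen_mem_J (i : Fin r) : gen K r L i ∈ Jrad K r L := by
  have : (1 * gen K r L i) * 1 ∈ Jrad K r L :=
    Submodule.mul_mem_mul (Submodule.mul_mem_mul trivial
      (Submodule.subset_span ⟨i, rfl⟩)) trivial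
  simpa using this

lemma J_Rs (l : ℕ) (a : TruncAlg K r L) (ha : a ∈ Jrad K r L) :
    ∀ x ∈ Rs (act K r L M) l, a • x ∈ Rs (act K r L M) (l+1) := by
  intro x hx
  unfold Jrad at ha
  induction ha using Submodule.mul_induction_on' with
  | mem_mul_mem a ha b _ =>
    rw [mul_smul]
    have hb : b • x ∈ Rs (act K r L M) l := stable_smul _ (Rs_stable l) b x hx
    generalize b • x = y at hb
    induction ha using Submodule.mul_induction_on' with
    | mem_mul_mem a _ c hc =>
      rw [mul_smul]
      refine stable_smul _ (Rs_stable (l+1)) a _ ?_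
      induction hc using Submodule.span_induction with
      | mem c hc => obtain ⟨i, rfl⟩ := hc; exact mem_upS (act K r L M) hb i
      | zero => rw [zero_smul]; exact Submodule.zero_mem _
      | add c e _ _ h1 h2 => rw [add_smul]; exact Submodule.add_mem _ h1 h2
      | smul k c _ h1 => rw [smul_assoc]; exact Submodule.smul_mem _ _ h1
    | add a _ b _ h1 h2 => rw [add_smul]; exact Submodule.add_mem _ h1 h2
  | add a _ b _ h1 h2 => rw [add_smul]; exact Submodule.add_mem _ h1 h2

lemma Jpow_Rs (l : ℕ) : ∀ a ∈ (Jrad K r L ^ l : Submodule K (TruncAlg K r L)), ∀ m : M,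
    a • m ∈ Rs (act K r L M) l := by
  induction l with
  | zero => intro a _ m; trivial
  | succ l ih =>
    intro a ha m
    rw [pow_succ'] at ha
    induction ha using Submodule.mul_induction_on' with
    | mem_mul_mem a ha b hb => rw [mul_smul]; exact J_Rs l a ha _ (ih b hb m)
    | add a _ b _ h1 h2 => rw [add_smul]; exact Submodule.add_mem _ h1 h2

lemma J_jpow (l : ℕ) (x : M) (hx : x ∈ jpow K r L M l) :
    ∀ a ∈ Jrad K r L, a • x ∈ jpow K r L M (l+1) := by
  unfold jpow at hx
  induction hx using Submodule.span_induction with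
  | mem x hx =>
    obtain ⟨b, hb, m, rfl⟩ := hx
    intro a ha
    refine Submodule.subset_span ⟨a * b, ?_, m, (mul_smul _ _ _).symm⟩
    rw [pow_succ']
    exact Submodule.mul_mem_mul ha hb
  | zero => intro a _; rw [smul_zero]; exact Submodule.zero_mem _
  | add x y _ _ h1 h2 => intro a ha; rw [smul_add]; exact Submodule.add_mem _ (h1 a ha) (h2 a ha)
  | smul c x _ h1 => intro a ha; rw [← mul_smul]; exact h1 _ (J_mul _ _ ha)

lemma jpow_eq (l : ℕ) : (jpow K r L M l).restrictScalars K = Rs (act K r L M) l := by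
  apply le_antisymm
  · have : jpow K r L M l ≤ ofStable (Rs (act K r L M) l) (Rs_stable l) := by
      refine Submodule.span_le.mpr ?_
      rintro x ⟨a, ha, m, rfl⟩
      exact Jpow_Rs l a ha m
    exact this
  · induction l with
    | zero =>
      intro x _
      refine Submodule.subset_span ⟨1, ?_, x, (one_smul _ _).symm⟩
      rw [pow_zero]; exact Submodule.one_le.mp le_rfl
    | succ l ih =>
      refine upS_le _ fun i x hx => ?_
      exact J_jpow l x (ih hx) _ (gen_mem_J i)

lemma Rs_word (k : ℕ) : ∀ w : List (Fin r), w.length + k = L + 1 →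
    ∀ y ∈ Rs (act K r L M) k, (w.map (gen K r L)).prod • y = 0 := by
  induction k with
  | zero => intro w hw y _; rw [word_zero w (by simpa using hw), zero_smul]
  | succ k ih =>
    intro w hw y hy
    have : Rs (act K r L M) (k+1) ≤
        LinearMap.ker (Algebra.lsmul K K M (w.map (gen K r L)).prod) := by
      refine upS_le _ fun i x hx => ?_
      rw [LinearMap.mem_ker]
      have := ih (w ++ [i]) (by simp; omega) x hx
      rw [List.map_append, List.prod_append, mul_smul] at this
      simpa [act_apply] using this
    exact this hy

lemma Rs_top : Rs (act K r L M) (L+1) = ⊥ := by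
  rw [eq_bot_iff]
  intro y hy
  have := Rs_word (L+1) [] (by simp) y hy
  simpa using this

lemma Ss_stable (l : ℕ) (i : Fin r) (x : M) (hx : x ∈ Ss (act K r L M) l) :
    gen K r L i • x ∈ Ss (act K r L M) l :=
  (mem_dnS _).mp (Ss_le_succ _ l hx) i

/-- The annihilator of `J`, as a submodule. -/
lemma mem_socle (x : M) : x ∈ socle (TruncAlg K r L) M ↔ ∀ i, gen K r L i • x = 0 := by
  let Z : Submodule (TruncAlg K r L) M := ofStable (Ss (act K r L M) 1) (Ss_stable 1)
  have hZ : ∀ x, x ∈ Z ↔ ∀ i, gen K r L i • x = 0 := by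
    intro x
    change x ∈ dnS (act K r L M) ⊥ ↔ _
    rw [mem_dnS]; rfl
  constructor
  · intro hx
    have : socle (TruncAlg K r L) M ≤ Z := by
      refine sSup_le fun p hp => ?_
      have hat : IsAtom p := isSimpleModule_iff_isAtom.mp hp
      rcases hat.le_iff.mp (inf_le_left : p ⊓ Z ≤ p) with h | h
      · exfalso
        have hex : ∀ y ∈ p, y ≠ 0 → ∃ i, gen K r L i • y ≠ 0 := by
          intro y hy hy0
          by_contra hcon
          push Not at hcon
          have : y ∈ p ⊓ Z := ⟨hy, (hZ y).mpr hcon⟩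
          rw [h] at this
          exact hy0 (by simpa using this)
        obtain ⟨y, hy, hy0⟩ := Submodule.exists_mem_ne_zero_of_ne_bot hat.1
        have : ∀ k, ∃ w : List (Fin r), w.length = k ∧ (w.map (gen K r L)).prod • y ≠ 0 := by
          intro k
          induction k with
          | zero => exact ⟨[], rfl, by simpa using hy0⟩
          | succ k ih =>
            obtain ⟨w, hw, hwy⟩ := ih
            obtain ⟨i, hi⟩ := hex _ (p.smul_mem _ hy) hwy
            exact ⟨i :: w, by simp [hw], by simpa [mul_smul] using hi⟩
        obtain ⟨w, hw, hwy⟩ := this (L+1)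
        rw [word_zero w hw, zero_smul] at hwy
        exact hwy rfl
      · rw [← h]; exact inf_le_right
    exact (hZ x).mp (this hx)
  · intro hx
    by_cases hx0 : x = 0
    · rw [hx0]; exact Submodule.zero_mem _
    let p : Submodule (TruncAlg K r L) M := ofStable (K ∙ x) (by
      intro i y hy
      obtain ⟨k, rfl⟩ := Submodule.mem_span_singleton.mp hy
      rw [show gen K r L i • k • x = 0 by
        have := (act K r L M i).map_smul k x
        rw [act_apply, act_apply, hx i, smul_zero] at this
        exact this]
      exact Submodule.zero_mem _)
    have hxp : x ∈ p := Submodule.mem_span_singleton_self x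
    have hp : IsSimpleModule (TruncAlg K r L) p := by
      rw [isSimpleModule_iff_isAtom]
      refine ⟨fun h => hx0 (by rw [h] at hxp; simpa using hxp), fun q hq => ?_⟩
      rw [eq_bot_iff]
      intro y hy
      obtain ⟨k, rfl⟩ := Submodule.mem_span_singleton.mp (hq.le hy)
      by_cases hk : k = 0
      · simp [hk]
      · exfalso
        apply hq.not_ge
        have hxq : x ∈ q := by
          have := q.smul_mem (algebraMap K _ k⁻¹) hy
          rwa [algebraMap_smul, smul_smul, inv_mul_cancel₀ hk, one_smul] at this
        intro z hz
        obtain ⟨c, rfl⟩ := Submodule.mem_span_singleton.mp hz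
        have := q.smul_mem (algebraMap K _ c) hxq
        rwa [algebraMap_smul] at this
    exact (le_sSup (a := p) (s := {p : Submodule (TruncAlg K r L) M | IsSimpleModule _ p}) hp) hxp

lemma soc_eq (l : ℕ) :
    (socSeries (TruncAlg K r L) M l).restrictScalars K = Ss (act K r L M) l := by
  induction l with
  | zero => rfl
  | succ l ih =>
    ext x
    change (socSeries (TruncAlg K r L) M l).mkQ x ∈ socle _ _ ↔ x ∈ dnS _ _
    rw [mem_socle (K := K), mem_dnS]
    refine forall_congr' fun i => ?_
    rw [← map_smul, ← ih]
    rw [act_apply, Submodule.mkQ_apply, Submodule.Quotient.mk_eq_zero]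
    rfl

variable [FiniteDimensional K M]

lemma rad_add (l : Fin (L+1)) : radLayering K r L M l +
    Module.finrank K (Rs (act K r L M) (l+1)) = Module.finrank K (Rs (act K r L M) l) := by
  unfold radLayering
  rw [jpow_eq, jpow_eq]
  exact quotDim_add (Rs_succ_le _ _)

lemma soc_add (l : Fin (L+1)) : socLayering K r L M l +
    Module.finrank K (Ss (act K r L M) l) = Module.finrank K (Ss (act K r L M) (l+1)) := by
  unfold socLayering
  rw [soc_eq, soc_eq]
  exact quotDim_add (Ss_le_succ _ _)

end Mods

/-! ### Construction -/

section Constr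

variable {K : Type} [Field K] {r : ℕ}

lemma local_maps (a b : ℕ) (hr : 0 < r) (h1 : b ≤ r * a) (h2 : a ≤ r * b) :
    ∃ f : Fin r → (Fin a → K) →ₗ[K] (Fin b → K), (∀ v, (∀ i, f i v = 0) → v = 0) ∧
      ∀ w, ∃ u : Fin r → (Fin a → K), ∑ i, f i (u i) = w := by
  -- matrix of a partial map in each case
  rcases le_total a b with hab | hab
  · let f : Fin r → (Fin a → K) →ₗ[K] (Fin b → K) := fun i =>
      LinearMap.pi fun k => if h : (k : ℕ) / a = i ∧ (k : ℕ) % a < a then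
        LinearMap.proj (⟨(k : ℕ) % a, h.2⟩ : Fin a) else 0
    have hf : ∀ i v k, f i v k = if h : (k : ℕ) / a = i ∧ (k : ℕ) % a < a then
        v ⟨(k : ℕ) % a, h.2⟩ else 0 := by
      intro i v k
      simp only [f, LinearMap.pi_apply]
      split_ifs <;> simp
    refine ⟨f, ?_, ?_⟩
    · intro v hv
      ext j
      have := congrFun (hv ⟨0, hr⟩) ⟨j, by omega⟩
      rw [hf, dif_pos ⟨Nat.div_eq_of_lt j.2, Nat.mod_lt _ (by have := j.2; omega)⟩] at this
      simpa [Nat.mod_eq_of_lt j.2] using this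
    · intro w
      refine ⟨fun i j => if h : i * a + j < b then w ⟨i * a + j, h⟩ else 0, ?_⟩
      ext k
      have ha : 0 < a := by
        rcases Nat.eq_zero_or_pos a with h | h
        · subst h; have := k.2; omega
        · exact h
      have hi : (k : ℕ) / a < r := by
        rw [Nat.div_lt_iff_lt_mul ha]; have := k.2; omega
      rw [Finset.sum_apply, Finset.sum_eq_single ⟨(k : ℕ) / a, hi⟩]
      · have hk : (k : ℕ) / a * a + (k : ℕ) % a = k := Nat.div_add_mod' _ _
        rw [hf, dif_pos ⟨rfl, Nat.mod_lt _ ha⟩]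
        simp [hk]
      · intro i _ hne
        rw [hf, dif_neg]
        rintro ⟨h, _⟩
        exact hne (Fin.ext h.symm)
      · simp
  · let f : Fin r → (Fin a → K) →ₗ[K] (Fin b → K) := fun i =>
      LinearMap.pi fun k => if h : (i : ℕ) * b + k < a then
        LinearMap.proj (⟨(i : ℕ) * b + k, h⟩ : Fin a) else 0
    have hf : ∀ i v k, f i v k = if h : (i : ℕ) * b + k < a then
        v ⟨(i : ℕ) * b + k, h⟩ else 0 := by
      intro i v k
      simp only [f, LinearMap.pi_apply]
      split_ifs <;> simp
    refine ⟨f, ?_, ?_⟩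
    · intro v hv
      ext j
      have hb : 0 < b := by
        rcases Nat.eq_zero_or_pos b with h | h
        · subst h; have := j.2; omega
        · exact h
      have hi : (j : ℕ) / b < r := by
        rw [Nat.div_lt_iff_lt_mul hb]; have := j.2; omega
      have := congrFun (hv ⟨(j : ℕ) / b, hi⟩) ⟨(j : ℕ) % b, Nat.mod_lt _ hb⟩
      have hj : (j : ℕ) / b * b + (j : ℕ) % b = j := Nat.div_add_mod' _ _
      rw [hf] at this
      simpa [hj] using this
    · intro w
      refine ⟨fun i => if i = ⟨0, hr⟩ then (fun j => if h : (j : ℕ) < b then w ⟨j, h⟩ else 0) else 0, ?_⟩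
      ext k
      rw [Finset.sum_apply, Finset.sum_eq_single ⟨0, hr⟩]
      · have : (k : ℕ) < a := by omega
        rw [hf]
        simp [this]
      · intro i _ hne
        simp [hne]
      · simp

variable {L : ℕ}

lemma prod_ofFn_act {V : Type*} [AddCommGroup V] [Module K V] (X : Fin r → V →ₗ[K] V) (w : List (Fin r)) (v : V) :
    (w.map X).prod v ∈ Rs X w.length := by
  induction w with
  | nil => trivial
  | cons i w ih =>
    simp only [List.map_cons, List.prod_cons, List.length_cons]
    exact mem_upS X ih i

/-- Any tuple of endomorphisms with vanishing words of length `L+1` gives a module. -/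
def algMap {V : Type*} [AddCommGroup V] [Module K V] (X : Fin r → V →ₗ[K] V)
    (h : Rs X (L+1) = ⊥) : TruncAlg K r L →ₐ[K] Module.End K V :=
  RingQuot.liftAlgHom K ⟨FreeAlgebra.lift K X, by
    rintro a b ⟨⟨f, rfl⟩, rfl⟩
    rw [map_zero, map_list_prod]
    ext v
    have := prod_ofFn_act X (List.ofFn f) v
    rw [List.length_ofFn, h] at this
    rw [List.map_ofFn] at this ⊢
    have e : (⇑((FreeAlgebra.lift K) X) ∘ fun j => FreeAlgebra.ι K (f j)) = X ∘ f := by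
      ext; simp
    rw [e]
    simpa using this⟩

lemma algMap_gen {V : Type*} [AddCommGroup V] [Module K V] (X : Fin r → V →ₗ[K] V)
    (h : Rs X (L+1) = ⊥) (i : Fin r) : algMap (L := L) X h (gen K r L i) = X i := by
  unfold algMap gen
  erw [RingQuot.liftAlgHom_mkAlgHom_apply]
  simp

lemma exists_module (b : Fin (L+1) → ℕ) (hr : 0 < r)
    (hb : ∀ l : Fin L, b l.succ ≤ r * b l.castSucc ∧ b l.castSucc ≤ r * b l.succ) :
    ∃ (M : Type) (_ : AddCommGroup M) (_ : Module K M)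
          (_ : Module (TruncAlg K r L) M) (_ : IsScalarTower K (TruncAlg K r L) M)
          (_ : FiniteDimensional K M),
        radLayering K r L M = b ∧ socLayering K r L M = fun l => b l.rev := by
  choose f hf1 hf2 using fun l : Fin L => local_maps (K := K) (r := r) (b l.castSucc) (b l.succ) hr
    (hb l).1 (hb l).2
  let V := ∀ l : Fin (L+1), (Fin (b l) → K)
  let X : Fin r → V →ₗ[K] V := fun i => LinearMap.pi
    (Fin.cases 0 (fun l => (f l i) ∘ₗ LinearMap.proj (φ := fun l : Fin (L+1) => Fin (b l) → K) l.castSucc))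
  have X0 : ∀ i v, X i v 0 = 0 := fun i v => rfl
  have XS : ∀ i v (l : Fin L), X i v l.succ = f l i (v l.castSucc) := fun i v l => rfl
  let G : ℕ → Submodule K V := fun m =>
    { carrier := {v | ∀ j : Fin (L+1), (j : ℕ) < m → v j = 0}
      add_mem' := fun {u v} hu hv j hj => by
        rw [Pi.add_apply, hu j hj, hv j hj, add_zero]
      zero_mem' := fun j _ => rfl
      smul_mem' := fun c v hv j hj => by rw [Pi.smul_apply, hv j hj, smul_zero] }
  have memG : ∀ m v, v ∈ G m ↔ ∀ j : Fin (L+1), (j : ℕ) < m → v j = 0 := fun m v => Iff.rfl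
  have hR : ∀ m, Rs X m = G m := by
    intro m
    induction m with
    | zero =>
      symm; rw [Rs, eq_top_iff]
      intro v _ j hj
      omega
    | succ m ih =>
      apply le_antisymm
      · refine upS_le X fun i v hv => ?_
        rw [ih] at hv
        intro j hj
        induction j using Fin.cases with
        | zero => exact X0 i v
        | succ l =>
          rw [XS, hv l.castSucc (by simpa using hj), map_zero]
      · intro v hv
        have hv' : v = ∑ j, Pi.single j (v j) := (Finset.univ_sum_single v).symm
        rw [hv']
        refine Submodule.sum_mem _ fun j _ => ?_
        by_cases hj : (j : ℕ) < m + 1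
        · rw [hv j hj, Pi.single_zero]; exact Submodule.zero_mem _
        · induction j using Fin.cases with
          | zero => simp at hj
          | succ l =>
            obtain ⟨u, hu⟩ := hf2 l (v l.succ)
            have : (Pi.single l.succ (v l.succ) : V) =
                ∑ i, X i (Pi.single l.castSucc (u i) : V) := by
              funext j
              rw [Finset.sum_apply]
              induction j using Fin.cases with
              | zero =>
                rw [Pi.single_eq_of_ne (Fin.succ_ne_zero l).symm]
                simp [X0]
              | succ k =>
                simp only [XS]
                by_cases hk : k = l
                · subst hk
                  simp [hu]
                · rw [Pi.single_eq_of_ne (by simpa using hk)]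
                  symm
                  refine Finset.sum_eq_zero fun i _ => ?_
                  rw [Pi.single_eq_of_ne (by simpa using hk), map_zero]
            rw [this]
            refine Submodule.sum_mem _ fun i _ => mem_upS X ?_ i
            rw [ih]
            intro j hjm
            refine Pi.single_eq_of_ne ?_ _
            rintro rfl
            simp at hj hjm
            omega
  have hRbot : Rs X (L+1) = ⊥ := by
    rw [hR, eq_bot_iff]
    intro v hv
    rw [Submodule.mem_bot]
    funext j
    exact hv j j.2
  have hS : ∀ m, Ss X m = G (L + 1 - m) := by
    intro m
    induction m with
    | zero => rw [Nat.sub_zero, ← hR, hRbot]; rfl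
    | succ m ih =>
      ext v
      rw [Ss, mem_dnS, ih]
      constructor
      · intro h j hj
        have hjL : (j : ℕ) < L := by omega
        obtain ⟨l, rfl⟩ : ∃ l : Fin L, j = l.castSucc := ⟨⟨j, hjL⟩, rfl⟩
        refine hf1 l _ fun i => ?_
        rw [← XS]
        refine h i l.succ ?_
        simp at hj ⊢
        omega
      · intro h i j hj
        induction j using Fin.cases with
        | zero => exact X0 i v
        | succ l =>
          rw [XS, h l.castSucc (by simp at hj ⊢; omega), map_zero]
  have hdim : ∀ m : Fin (L+1), quotDim K V (G (m+1)) (G m) = b m := by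
    intro m
    let g : G m →ₗ[K] (Fin (b m) → K) :=
      (LinearMap.proj (φ := fun l : Fin (L+1) => Fin (b l) → K) m) ∘ₗ (G m).subtype
    have hg : Function.Surjective g := by
      intro w
      refine ⟨⟨Pi.single m w, ?_⟩, ?_⟩
      · intro j hj
        exact Pi.single_eq_of_ne (by rintro rfl; omega) _
      · simp [g]
    have hker : Submodule.comap (G m).subtype (G (m+1)) = LinearMap.ker g := by
      ext ⟨v, hv⟩
      rw [LinearMap.mem_ker]
      constructor
      · intro h; exact h m (by omega)
      · intro h j hj
        by_cases hjm : j = m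
        · subst hjm; exact h
        · exact hv j (by have : (j : ℕ) ≠ m := fun e => hjm (Fin.ext e); omega)
    unfold quotDim
    rw [hker, (g.quotKerEquivOfSurjective hg).finrank_eq]
    simp
  let iM : Module (TruncAlg K r L) V := Module.compHom V (algMap (L := L) X hRbot).toRingHom
  have hsm : ∀ (a : TruncAlg K r L) (v : V), a • v = algMap (L := L) X hRbot a v := fun _ _ => rfl
  have iT : IsScalarTower K (TruncAlg K r L) V := ⟨fun k a v => by
    rw [hsm, hsm, map_smul]; rfl⟩
  have hact : act K r L V = X := by
    funext i
    refine LinearMap.ext fun v => ?_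
    rw [act_apply, hsm, algMap_gen]
  refine ⟨V, inferInstance, inferInstance, iM, iT, inferInstance, ?_, ?_⟩
  · funext l
    unfold radLayering
    rw [jpow_eq, jpow_eq, hact, hR, hR]
    exact hdim l
  · funext l
    unfold socLayering
    rw [soc_eq, soc_eq, hact, hS, hS]
    have := hdim l.rev
    rw [← this]
    simp only [Fin.val_rev]
    rw [show L + 1 - ((l : ℕ) + 1) + 1 = L + 1 - l by omega]

end Constr

/-! ### Assembly -/

lemma sum_Iic_tele (L : ℕ) (h : Fin (L+1) → ℕ) (P : ℕ → ℤ)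
    (hP : ∀ l : Fin (L+1), (h l : ℤ) = P (l+1) - P l) (l : Fin (L+1)) :
    ((∑ j ∈ Finset.Iic l, h j : ℕ) : ℤ) = P (l+1) - P 0 := by
  induction l using Fin.induction with
  | zero =>
    have : Finset.Iic (0 : Fin (L+1)) = {0} := by ext x; simp
    rw [this, Finset.sum_singleton, hP]; simp
  | succ l ih =>
    have : Finset.Iic l.succ = insert l.succ (Finset.Iic l.castSucc) := by
      ext x
      simp only [Finset.mem_Iic, Finset.mem_insert, Fin.le_def, Fin.ext_iff, Fin.val_succ,
        Fin.val_castSucc]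
      omega
    rw [this, Finset.sum_insert (by simp [Fin.le_def]), Nat.cast_add, ih, hP]
    simp

lemma sum_univ_tele (L : ℕ) (h : Fin (L+1) → ℕ) (P : ℕ → ℤ)
    (hP : ∀ l : Fin (L+1), (h l : ℤ) = P (l+1) - P l) :
    ((∑ j, h j : ℕ) : ℤ) = P (L+1) - P 0 := by
  have := sum_Iic_tele L h P hP (Fin.last L)
  have e : Finset.Iic (Fin.last L) = Finset.univ := by ext x; simp [Fin.le_last]
  rw [e] at this
  simpa using this

lemma path_unique (L : ℕ) (A B : ℕ → ℤ) (h0 : A 0 = B 0)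
    (h : ∀ l : Fin (L+1), A (l+1) - A l = B (l+1) - B l) : ∀ k ≤ L + 1, A k = B k := by
  intro k
  induction k with
  | zero => intro _; exact h0
  | succ k ih =>
    intro hk
    have h1 := ih (by omega)
    have h2 := h ⟨k, by omega⟩
    dsimp only at h2
    omega

lemma sum_rad {K : Type*} [Field K] {r L : ℕ} {M : Type*} [AddCommGroup M] [Module K M]
    [Module (TruncAlg K r L) M] [IsScalarTower K (TruncAlg K r L) M] [FiniteDimensional K M] :
    ∑ l, radLayering K r L M l = Module.finrank K M := by
  have := sum_univ_tele L (radLayering K r L M)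
    (fun k => - (Module.finrank K (Rs (act K r L M) k) : ℤ))
    (fun l => by have := rad_add (K := K) (r := r) (M := M) l; push_cast [← this]; ring)
  rw [Rs_top, finrank_bot] at this
  rw [show Rs (act K r L M) 0 = ⊤ from rfl, finrank_top] at this
  push_cast at this
  have h2 : ((∑ l, radLayering K r L M l : ℕ) : ℤ) = Module.finrank K M := by
    push_cast; linarith
  exact_mod_cast h2

lemma info {K : Type*} [Field K] {r L : ℕ} {M : Type*} [AddCommGroup M] [Module K M]
    [Module (TruncAlg K r L) M] [IsScalarTower K (TruncAlg K r L) M] [FiniteDimensional K M]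
    (d : ℕ) (hd : Module.finrank K M = d) :
    ∃ A C : ℕ → ℤ, (∀ k ≤ L + 1, C k ≤ A k) ∧ A 0 = 0 ∧ C 0 = 0 ∧ A (L+1) = d ∧
      C (L+1) = d ∧ (∀ k ≤ L, A k ≤ A (k+1)) ∧
      (∀ k < L, A (k+2) - A (k+1) ≤ r * (A (k+1) - A k)) ∧
      (∀ k < L, C (k+1) - C k ≤ r * (C (k+2) - C (k+1))) ∧
      (∀ l : Fin (L+1), (radLayering K r L M l : ℤ) = A (l+1) - A l) ∧
      (∀ l : Fin (L+1), (socLayering K r L M l : ℤ) = C (L+1-l) - C (L-l)) ∧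
      (∀ l : Fin (L+1), ((∑ j ∈ Finset.Iic l, radLayering K r L M j : ℕ) : ℤ) = A (l+1)) ∧
      (∀ l : Fin (L+1), ((∑ j ∈ Finset.Iic l, socLayering K r L M j : ℕ) : ℤ) = d - C (L-l)) := by
  set X := act K r L M with hX
  let ρ : ℕ → ℤ := fun k => Module.finrank K (Rs X k)
  let σ : ℕ → ℤ := fun k => Module.finrank K (Ss X k)
  have hρ0 : ρ 0 = d := by simp only [ρ]; rw [show Rs X 0 = ⊤ from rfl, finrank_top, hd]
  have hρL : ρ (L+1) = 0 := by simp only [ρ]; rw [hX, Rs_top, finrank_bot, Nat.cast_zero]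
  have hσ0 : σ 0 = 0 := by simp only [σ]; rw [show Ss X 0 = ⊥ from rfl, finrank_bot, Nat.cast_zero]
  have hρσ : ∀ k ≤ L + 1, ρ (L + 1 - k) ≤ σ k := fun k hk => by
    have := Submodule.finrank_mono (Rs_le_Ss X L Rs_top k hk)
    simp only [ρ, σ]; exact_mod_cast this
  have hσL : σ (L+1) = d := by
    have h1 := hρσ (L+1) le_rfl
    rw [Nat.sub_self, hρ0] at h1
    have h2 : σ (L+1) ≤ d := by
      have := Submodule.finrank_le (Ss X (L+1))
      rw [hd] at this
      simp only [σ]; exact_mod_cast this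
    omega
  have hρm : ∀ k, ρ (k+1) ≤ ρ k := fun k => by
    have := Submodule.finrank_mono (Rs_succ_le X k)
    simp only [ρ]; exact_mod_cast this
  have hρg : ∀ k, ρ (k+1) - ρ (k+2) ≤ r * (ρ k - ρ (k+1)) := fun k => by
    have : Module.finrank K (Rs X (k+1)) + r * Module.finrank K (Rs X (k+1)) ≤
      Module.finrank K (Rs X (k+2)) + r * Module.finrank K (Rs X k) :=
      finrank_upS X (Rs_succ_le X k)
    have : ρ (k+1) + r * ρ (k+1) ≤ ρ (k+2) + r * ρ k := by simp only [ρ]; exact_mod_cast this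
    linarith
  have hσg : ∀ k, σ (k+2) - σ (k+1) ≤ r * (σ (k+1) - σ k) := fun k => by
    have : Module.finrank K (Ss X (k+2)) + r * Module.finrank K (Ss X k) ≤
      Module.finrank K (Ss X (k+1)) + r * Module.finrank K (Ss X (k+1)) :=
      finrank_dnS X (Ss_le_succ X k)
    have : σ (k+2) + r * σ k ≤ σ (k+1) + r * σ (k+1) := by simp only [σ]; exact_mod_cast this
    linarith
  have hrad : ∀ l : Fin (L+1), (radLayering K r L M l : ℤ) = ρ l - ρ (l+1) := fun l => by
    have := rad_add (K := K) (r := r) (M := M) l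
    simp only [ρ]
    rw [← this]; push_cast; ring
  have hsoc : ∀ l : Fin (L+1), (socLayering K r L M l : ℤ) = σ (l+1) - σ l := fun l => by
    have := soc_add (K := K) (r := r) (M := M) l
    simp only [σ]
    rw [← this]; push_cast; ring
  refine ⟨fun k => d - ρ k, fun k => d - σ (L + 1 - k), ?_, ?_, ?_, ?_, ?_, ?_, ?_, ?_, ?_, ?_, ?_, ?_⟩
  · intro k hk
    have := hρσ (L+1-k) (by omega)
    rw [show L + 1 - (L + 1 - k) = k by omega] at this
    dsimp only; omega
  · dsimp only; omega
  · simp [hσL]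
  · dsimp only; omega
  · simp [hσ0]
  · intro k _; have := hρm k; dsimp only; omega
  · intro k _; have := hρg k; dsimp only; linarith
  · intro k hk
    have := hσg (L + 1 - (k+2))
    rw [show L + 1 - (k+2) + 2 = L + 1 - k by omega,
      show L + 1 - (k+2) + 1 = L + 1 - (k+1) by omega] at this
    dsimp only; linarith
  · intro l; rw [hrad]; ring
  · intro l
    rw [hsoc]
    dsimp only
    rw [show L + 1 - (L + 1 - (l:ℕ)) = l by omega, show L + 1 - (L - (l:ℕ)) = l + 1 by omega]
    ring
  · intro l
    rw [sum_Iic_tele L _ (fun k => d - ρ k) (fun l => by rw [hrad]; ring)]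
    dsimp only; rw [hρ0]; ring
  · intro l
    rw [sum_Iic_tele L _ σ hsoc]
    dsimp only
    rw [hσ0, show L + 1 - (L - (l:ℕ)) = l + 1 by omega]; ring

/-- For `r ≥ 2` and `d > L+1`, a dimension tuple `(d_0,…,d_L)` summing to `d`
satisfies the inequalities `d_l ≤ r·d_{l-1}` and `d_{l-1} ≤ r·d_l` (for `1 ≤ l ≤ L`) iff it is
the radical layering of some finite-dimensional `Λ`-module `M` for which
`(rad M, socseq M)` is minimal in `rad-soc(d)`. -/
theorem stmt0 (K : Type) [Field K] [IsAlgClosed K] (r L : ℕ) (hr : 2 ≤ r) (hL : 0 < L)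
    (d : ℕ) (hd : L + 1 < d) (dv : Fin (L + 1) → ℕ) (hsum : ∑ l, dv l = d) :
    (∀ l : Fin L, dv l.succ ≤ r * dv l.castSucc ∧ dv l.castSucc ≤ r * dv l.succ) ↔
      (∃ (M : Type) (_ : AddCommGroup M) (_ : Module K M)
          (_ : Module (TruncAlg K r L) M) (_ : IsScalarTower K (TruncAlg K r L) M)
          (_ : FiniteDimensional K M),
        radLayering K r L M = dv ∧
        ∀ (N : Type) (_ : AddCommGroup N) (_ : Module K N)
            (_ : Module (TruncAlg K r L) N) (_ : IsScalarTower K (TruncAlg K r L) N)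
            (_ : FiniteDimensional K N),
          Module.finrank K N = d →
          DomLE L (radLayering K r L N) (radLayering K r L M) →
          DomLE L (socLayering K r L N) (socLayering K r L M) →
          radLayering K r L N = radLayering K r L M ∧
            socLayering K r L N = socLayering K r L M) := by
  constructor
  · intro h
    obtain ⟨M, i1, i2, i3, i4, i5, hrad, hsoc⟩ := exists_module (K := K) dv (by omega) h
    refine ⟨M, i1, i2, i3, i4, i5, hrad, ?_⟩
    intro N j1 j2 j3 j4 j5 hN hD1 hD2
    have hM : Module.finrank K M = d := by rw [← sum_rad (r := r) (L := L), hrad, hsum]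
    obtain ⟨A, C, -, hA0, hC0, hA1, hC1, -, -, -, hr1, hs1, hR1, hS1⟩ := info (r := r) (L := L) (M := M) d hM
    obtain ⟨A', C', hCA', hA0', hC0', hA1', hC1', -, -, -, hr2, hs2, hR2, hS2⟩ :=
      info (r := r) (L := L) (M := N) d hN
    have hAC : ∀ k ≤ L + 1, A k = C k := path_unique L A C (by rw [hA0, hC0]) fun l => by
      rw [← hr1 l, hrad]
      have := hs1 l.rev
      rw [hsoc] at this
      dsimp only at this
      rw [Fin.rev_rev, Fin.val_rev, show L + 1 - (L + 1 - ((l:ℕ) + 1)) = l + 1 by omega,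
        show L - (L + 1 - ((l:ℕ) + 1)) = l by omega] at this
      exact this
    have hle1 : ∀ k ≤ L + 1, A' k ≤ A k := by
      intro k hk
      rcases k with _ | k
      · omega
      · have := hD1 ⟨k, by omega⟩
        rw [← Nat.cast_le (α := ℤ), hR1, hR2] at this
        exact this
    have hle2 : ∀ k ≤ L + 1, C k ≤ C' k := by
      intro k hk
      by_cases hkL : k = L + 1
      · subst hkL; omega
      · have := hD2 ⟨L - k, by omega⟩
        rw [← Nat.cast_le (α := ℤ), hS1, hS2] at this
        dsimp only at this
        rw [show L - (L - k) = k by omega] at this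
        omega
    have hall : ∀ k ≤ L + 1, A' k = A k ∧ C' k = C k := by
      intro k hk
      have h1 := hle1 k hk
      have h2 := hle2 k hk
      have h3 := hAC k hk
      have h4 := hCA' k hk
      omega
    constructor
    · funext l
      have : (radLayering K r L N l : ℤ) = radLayering K r L M l := by
        rw [hr1, hr2, (hall _ (by omega)).1, (hall _ (by omega)).1]
      exact_mod_cast this
    · funext l
      have : (socLayering K r L N l : ℤ) = socLayering K r L M l := by
        rw [hs1, hs2, (hall _ (by omega)).2, (hall _ (by omega)).2]
      exact_mod_cast this
  · rintro ⟨M, i1, i2, i3, i4, i5, hrad, hmin⟩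
    have hM : Module.finrank K M = d := by rw [← sum_rad (r := r) (L := L), hrad, hsum]
    obtain ⟨A, C, hCA, hA0, hC0, hA1, hC1, hAm, hAg, hCg, hr1, hs1, hR1, hS1⟩ :=
      info (r := r) (L := L) (M := M) d hM
    obtain ⟨B, hB0, hB1, hBb, hBm, hBg⟩ := comb r L hr d hd A C hCA hA0 hC0 hA1 hC1 hAm hAg hCg
    let b : Fin (L+1) → ℕ := fun l => (B (l+1) - B l).toNat
    have hbB : ∀ l : Fin (L+1), (b l : ℤ) = B (l+1) - B l := fun l => by
      have := hBm l (by omega)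
      simp only [b]; omega
    have hbi : ∀ l : Fin L, b l.succ ≤ r * b l.castSucc ∧ b l.castSucc ≤ r * b l.succ := by
      intro l
      have := hBg l l.2
      rw [← Nat.cast_le (α := ℤ), ← Nat.cast_le (α := ℤ)]
      push_cast
      rw [hbB, hbB]
      exact this
    obtain ⟨N, j1, j2, j3, j4, j5, hradN, hsocN⟩ := exists_module (K := K) b (by omega) hbi
    have hN : Module.finrank K N = d := by
      have h1 := sum_univ_tele L b B hbB
      rw [hB0, hB1, sub_zero] at h1
      rw [← sum_rad (r := r) (L := L), hradN]
      exact_mod_cast h1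
    obtain ⟨A', C', -, hA0', hC0', hA1', hC1', -, -, -, hr2, hs2, hR2, hS2⟩ :=
      info (r := r) (L := L) (M := N) d hN
    have hA' : ∀ k ≤ L + 1, A' k = B k := path_unique L A' B (by rw [hA0', hB0]) fun l => by
      rw [← hr2 l, hradN, hbB]
    have hC' : ∀ k ≤ L + 1, C' k = B k := path_unique L C' B (by rw [hC0', hB0]) fun l => by
      rw [← hbB]
      have := hs2 l.rev
      rw [hsocN] at this
      dsimp only at this
      rw [Fin.rev_rev, Fin.val_rev, show L + 1 - (L + 1 - ((l:ℕ) + 1)) = l + 1 by omega,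
        show L - (L + 1 - ((l:ℕ) + 1)) = l by omega] at this
      exact this.symm
    have hfin := hmin N j1 j2 j3 j4 j5 hN
      (fun l => by
        rw [← Nat.cast_le (α := ℤ), hR1, hR2, hA' _ (by omega)]
        exact (hBb _ (by omega)).2)
      (fun l => by
        rw [← Nat.cast_le (α := ℤ), hS1, hS2, hC' _ (by omega)]
        have := (hBb (L - l) (by omega)).1
        omega)
    have : dv = b := by rw [← hrad, ← hfin.1, hradN]
    rw [this]
    exact hbi
end
end

section
/- For every finite-dimensional Λ-module M, one has reverse(rad(M)) ≼ socseq(M) and reverse(socseq(M)) ≼ rad(M) in the dominance order on ℕ^{L+1}. -/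
noncomputable section

namespace TruncHelp

lemma top_le (K : Type*) [Field K] (r L : ℕ) (a : TruncAlg K r L) :
    a ∈ (1 ⊔ Submodule.span K (Set.range (gen K r L)) * ⊤ : Submodule K (TruncAlg K r L)) := by
  obtain ⟨x, rfl⟩ : ∃ x, (RingQuot.mkAlgHom K (TruncRel K r L) x : TruncAlg K r L) = a :=
    RingQuot.mkAlgHom_surjective K (TruncRel K r L) a
  let φ : FreeAlgebra K (Fin r) →ₐ[K] TruncAlg K r L := RingQuot.mkAlgHom K (TruncRel K r L)
  change φ x ∈ _
  induction x using FreeAlgebra.induction with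
  | grade0 c =>
    rw [AlgHom.commutes]
    exact Submodule.mem_sup_left (Submodule.algebraMap_mem c)
  | grade1 i =>
    refine Submodule.mem_sup_right ?_
    have := Submodule.mul_mem_mul (M := Submodule.span K (Set.range (gen K r L)))
      (N := (⊤ : Submodule K (TruncAlg K r L)))
      (Submodule.subset_span ⟨i, rfl⟩) (Submodule.mem_top (x := 1))
    rw [mul_one] at this
    exact this
  | add x y hx hy => rw [map_add]; exact add_mem hx hy
  | mul x y hx hy =>
    rw [map_mul]
    obtain ⟨u, hu, v, hv, huv⟩ := Submodule.mem_sup.1 hx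
    obtain ⟨c, rfl⟩ := Submodule.mem_one.1 hu
    rw [← huv, add_mul, ← Algebra.smul_def]
    refine add_mem (Submodule.smul_mem _ _ hy) (Submodule.mem_sup_right ?_)
    have := Submodule.mul_mem_mul hv (Submodule.mem_top (x := φ y) (R := K))
    rw [mul_assoc] at this
    exact SetLike.le_def.1 (mul_le_mul' le_rfl le_top) this

lemma jrad_le (K : Type*) [Field K] (r L : ℕ) :
    Jrad K r L ≤ Submodule.span K (Set.range (gen K r L)) * ⊤ := by
  set G := Submodule.span K (Set.range (gen K r L)) with hG
  have h : (⊤ : Submodule K (TruncAlg K r L)) ≤ 1 ⊔ G * ⊤ := fun a _ => top_le K r L a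
  unfold Jrad
  calc ⊤ * G * ⊤ ≤ (1 ⊔ G * ⊤) * G * ⊤ :=
        mul_le_mul' (mul_le_mul' h le_rfl) le_rfl
    _ = G * ⊤ ⊔ G * (⊤ * G * ⊤) := by
        rw [Submodule.sup_mul, Submodule.sup_mul, one_mul]; simp only [mul_assoc]
    _ ≤ G * ⊤ := sup_le le_rfl (mul_le_mul' le_rfl le_top)

lemma jrad_pow_le (K : Type*) [Field K] (r L n : ℕ) :
    Jrad K r L ^ n ≤ Submodule.span K (Set.range (gen K r L)) ^ n * ⊤ := by
  induction n with
  | zero => rw [pow_zero, pow_zero, one_mul]; exact le_top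
  | succ n ih =>
    have h1 : (⊤ : Submodule K (TruncAlg K r L)) * Jrad K r L ≤ Jrad K r L := by
      unfold Jrad
      rw [← mul_assoc, ← mul_assoc]
      exact mul_le_mul' (mul_le_mul' le_top le_rfl) le_rfl
    rw [pow_succ, pow_succ]
    refine (mul_le_mul' ih le_rfl).trans ?_
    rw [mul_assoc, mul_assoc]
    exact mul_le_mul' le_rfl (h1.trans (jrad_le K r L))

lemma jrad_pow_eq (K : Type*) [Field K] (r L : ℕ) : Jrad K r L ^ (L + 1) = ⊥ := by
  have h : Submodule.span K (Set.range (gen K r L)) ^ (L + 1) = ⊥ := by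
    rw [Submodule.span_pow, Submodule.span_eq_bot]
    intro x hx
    obtain ⟨f, rfl⟩ := Set.mem_pow.1 hx
    choose g hg using fun i => (f i).2
    let φ : FreeAlgebra K (Fin r) →ₐ[K] TruncAlg K r L := RingQuot.mkAlgHom K (TruncRel K r L)
    have : φ ((List.ofFn fun j => FreeAlgebra.ι K (g j)).prod) = φ 0 :=
      RingQuot.mkAlgHom_rel K ⟨⟨g, rfl⟩, rfl⟩
    rw [map_zero, map_list_prod, List.map_ofFn] at this
    rw [← this]
    congr 2
    funext i
    exact (hg i).symm
  have := jrad_pow_le K r L (L+1)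
  rw [h, Submodule.bot_mul] at this
  exact le_bot_iff.1 this

lemma mem_socle (K : Type*) [Field K] (r L : ℕ) (N : Type*) [AddCommGroup N]
    [Module (TruncAlg K r L) N] (x : N)
    (hx : ∀ a ∈ Jrad K r L, a • x = 0) : x ∈ socle (TruncAlg K r L) N := by
  by_cases h0 : x = 0
  · rw [h0]; exact zero_mem _
  have key : ∀ a : TruncAlg K r L, ∃ c : K, a • x = algebraMap K (TruncAlg K r L) c • x := by
    intro a
    obtain ⟨u, hu, v, hv, huv⟩ := Submodule.mem_sup.1 (top_le K r L a)
    obtain ⟨c, rfl⟩ := Submodule.mem_one.1 hu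
    refine ⟨c, ?_⟩
    have hv' : v ∈ Jrad K r L := by
      unfold Jrad
      rw [mul_assoc]
      have := Submodule.mul_mem_mul (Submodule.mem_top (x := (1 : TruncAlg K r L)) (R := K)) hv
      rwa [one_mul] at this
    rw [← huv, add_smul, hx v hv', add_zero]
  have hs : IsSimpleModule (TruncAlg K r L) (Submodule.span (TruncAlg K r L) {x}) := by
    rw [isSimpleModule_iff_isAtom]
    refine ⟨by simpa using h0, fun p hp => ?_⟩
    by_contra hne
    obtain ⟨y, hy, hy0⟩ := Submodule.exists_mem_ne_zero_of_ne_bot hne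
    obtain ⟨a, rfl⟩ := Submodule.mem_span_singleton.1 (hp.le hy)
    obtain ⟨c, hc⟩ := key a
    have hc0 : c ≠ 0 := by
      rintro rfl
      apply hy0
      rw [hc, map_zero, zero_smul]
    apply hp.not_ge
    rw [Submodule.span_singleton_le_iff_mem]
    have := p.smul_mem (algebraMap K (TruncAlg K r L) c⁻¹) hy
    rwa [hc, smul_smul, ← map_mul, inv_mul_cancel₀ hc0, map_one, one_smul] at this
  exact (le_sSup (show _ ∈ {p : Submodule (TruncAlg K r L) N | IsSimpleModule _ ↥p} from hs) :
    _ ≤ socle _ N) (Submodule.mem_span_singleton_self x)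

section
variable (K : Type*) [Field K] (r L : ℕ) (M : Type*) [AddCommGroup M] [Module K M]
    [Module (TruncAlg K r L) M] [IsScalarTower K (TruncAlg K r L) M]

lemma jrad_smul (n : ℕ) (y : M) (hy : y ∈ jpow K r L M n) :
    ∀ j ∈ Jrad K r L, j • y ∈ jpow K r L M (n + 1) := by
  unfold jpow at hy
  induction hy using Submodule.span_induction with
  | mem x hx =>
    intro j hj
    obtain ⟨a, ha, m, rfl⟩ := hx
    refine Submodule.subset_span ⟨j * a, ?_, m, (mul_smul _ _ _).symm⟩
    rw [pow_succ']
    exact Submodule.mul_mem_mul hj ha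
  | zero => intro j _; rw [smul_zero]; exact zero_mem _
  | add x y _ _ hx hy => intro j hj; rw [smul_add]; exact add_mem (hx j hj) (hy j hj)
  | smul b x _ hx =>
    intro j hj
    rw [smul_smul]
    apply hx
    have := Submodule.mul_mem_mul hj (Submodule.mem_top (x := b) (R := K))
    unfold Jrad at this ⊢
    rw [mul_assoc] at this
    exact SetLike.le_def.1 (mul_le_mul' le_rfl le_top) this

lemma jpow_top : jpow K r L M (L + 1) = ⊥ := by
  unfold jpow
  rw [Submodule.span_eq_bot]
  rintro x ⟨a, ha, m, rfl⟩
  rw [jrad_pow_eq, Submodule.mem_bot] at ha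
  rw [ha, zero_smul]

lemma jpow_zero : jpow K r L M 0 = ⊤ := by
  rw [eq_top_iff]
  intro x _
  refine Submodule.subset_span ⟨1, ?_, x, (one_smul _ _).symm⟩
  rw [pow_zero]; exact Submodule.one_le.1 le_rfl

lemma jpow_anti (n : ℕ) : jpow K r L M (n + 1) ≤ jpow K r L M n := by
  unfold jpow
  rw [Submodule.span_le]
  rintro x ⟨a, ha, m, rfl⟩
  rw [pow_succ] at ha
  induction ha using Submodule.mul_induction_on' with
  | mem_mul_mem u hu v hv =>
    rw [mul_smul]
    exact Submodule.subset_span ⟨u, hu, v • m, rfl⟩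
  | add x _ y _ hx hy => rw [add_smul]; exact add_mem hx hy

lemma jpow_le_soc (l : ℕ) (hl : l ≤ L + 1) :
    jpow K r L M (L + 1 - l) ≤ socSeries (TruncAlg K r L) M l := by
  induction l with
  | zero => rw [Nat.sub_zero, jpow_top]; exact bot_le
  | succ l ih =>
    intro x hx
    change (socSeries (TruncAlg K r L) M l).mkQ x ∈ socle _ _
    apply mem_socle
    intro a ha
    rw [← map_smul, Submodule.mkQ_apply, Submodule.Quotient.mk_eq_zero]
    apply ih (by omega)
    have := jrad_smul K r L M _ x hx a ha
    rwa [show L + 1 - (l + 1) + 1 = L + 1 - l by omega] at this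
end

lemma soc_mono (R M : Type*) [Ring R] [AddCommGroup M] [Module R M] (l : ℕ) :
    socSeries R M l ≤ socSeries R M (l + 1) := by
  intro x hx
  change (socSeries R M l).mkQ x ∈ socle _ _
  rw [Submodule.mkQ_apply, (Submodule.Quotient.mk_eq_zero _).2 hx]
  exact zero_mem _

lemma quotDim_add (K M : Type*) [Field K] [AddCommGroup M] [Module K M] [FiniteDimensional K M]
    (p q : Submodule K M) (h : p ≤ q) :
    quotDim K M p q + Module.finrank K p = Module.finrank K q := by
  unfold quotDim
  rw [← (Submodule.comap q.subtype p).finrank_quotient_add_finrank,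
    (Submodule.comapSubtypeEquivOfLe h).finrank_eq]

lemma sum_Iic (L : ℕ) (f : ℕ → ℕ) (l : Fin (L + 1)) :
    ∑ j ∈ Finset.Iic l, f (j : ℕ) = ∑ j ∈ Finset.range ((l : ℕ) + 1), f j := by
  have h : Finset.range ((l : ℕ) + 1) = (Finset.Iic l).map Fin.valEmbedding := by
    rw [Fin.map_valEmbedding_Iic]
    ext x
    simp [Nat.lt_succ_iff]
  rw [h, Finset.sum_map]
  rfl

lemma sum_up (d F : ℕ → ℕ) (h : ∀ j, d j + F j = F (j + 1)) (n : ℕ) :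
    ∑ j ∈ Finset.range n, d j + F 0 = F n := by
  induction n with
  | zero => simp
  | succ n ih => rw [Finset.sum_range_succ, ← h n, ← ih]; ring

lemma sum_down (d F : ℕ → ℕ) (h : ∀ j, d j + F (j + 1) = F j) (n : ℕ) :
    ∑ j ∈ Finset.range n, d j + F n = F 0 := by
  induction n with
  | zero => simp
  | succ n ih => rw [Finset.sum_range_succ, ← ih, ← h n]; ring

lemma sum_up_rev (L : ℕ) (d F : ℕ → ℕ) (h : ∀ j, d j + F j = F (j + 1)) (n : ℕ) (hn : n ≤ L + 1) :
    ∑ j ∈ Finset.range n, d (L - j) + F (L + 1 - n) = F (L + 1) := by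
  induction n with
  | zero => simp
  | succ n ih =>
    have h1 := h (L - n)
    rw [Finset.sum_range_succ, ← ih (by omega), show L + 1 - (n + 1) = L - n by omega,
      show L + 1 - n = L - n + 1 by omega, ← h1]
    ring

lemma sum_down_rev (L : ℕ) (d F : ℕ → ℕ) (h : ∀ j, d j + F (j + 1) = F j) (n : ℕ)
    (hn : n ≤ L + 1) :
    ∑ j ∈ Finset.range n, d (L - j) + F (L + 1) = F (L + 1 - n) := by
  induction n with
  | zero => simp
  | succ n ih =>
    have h1 := h (L - n)
    have h2 := ih (by omega)
    rw [show L + 1 - n = L - n + 1 by omega] at h2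
    rw [Finset.sum_range_succ, show L + 1 - (n + 1) = L - n by omega]
    omega

end TruncHelp

/-- For every finite-dimensional `Λ`-module `M`,
`reverse (rad M) ≼ socseq M` and `reverse (socseq M) ≼ rad M` in the dominance order. -/
theorem stmt4 (K : Type) [Field K] [IsAlgClosed K] (r L : ℕ) (hr : 0 < r) (hL : 0 < L)
    (M : Type) [AddCommGroup M] [Module K M] [Module (TruncAlg K r L) M]
    [IsScalarTower K (TruncAlg K r L) M] [FiniteDimensional K M] :
    DomLE L (revTuple L (radLayering K r L M)) (socLayering K r L M) ∧
    DomLE L (revTuple L (socLayering K r L M)) (radLayering K r L M) := by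
  set R : ℕ → ℕ := fun n => Module.finrank K ((jpow K r L M n).restrictScalars K) with hR
  set S : ℕ → ℕ := fun n =>
    Module.finrank K ((socSeries (TruncAlg K r L) M n).restrictScalars K) with hS
  set dR : ℕ → ℕ := fun n => quotDim K M ((jpow K r L M (n + 1)).restrictScalars K)
    ((jpow K r L M n).restrictScalars K) with hdR
  set dS : ℕ → ℕ := fun n => quotDim K M ((socSeries (TruncAlg K r L) M n).restrictScalars K)
    ((socSeries (TruncAlg K r L) M (n + 1)).restrictScalars K) with hdS
  have hRR : ∀ j, dR j + R (j + 1) = R j := fun j =>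
    TruncHelp.quotDim_add K M _ _ (TruncHelp.jpow_anti K r L M j)
  have hSS : ∀ j, dS j + S j = S (j + 1) := fun j =>
    TruncHelp.quotDim_add K M _ _ (TruncHelp.soc_mono (TruncAlg K r L) M j)
  have hle : ∀ l ≤ L + 1, R (L + 1 - l) ≤ S l := fun l hl =>
    Submodule.finrank_mono (TruncHelp.jpow_le_soc K r L M l hl)
  have hR0 : S (L + 1) ≤ R 0 := by
    refine Submodule.finrank_mono ?_
    rw [TruncHelp.jpow_zero]
    exact le_top
  have hS0 : S 0 = 0 := by
    change Module.finrank K (⊥ : Submodule K M) = 0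
    exact finrank_bot K M
  have hrev : ∀ (d : ℕ → ℕ) (l : Fin (L + 1)),
      ∑ j ∈ Finset.Iic l, d ((Fin.rev j : Fin (L + 1)) : ℕ)
        = ∑ j ∈ Finset.range ((l : ℕ) + 1), d (L - j) := by
    intro d l
    rw [← TruncHelp.sum_Iic L (fun j => d (L - j)) l]
    refine Finset.sum_congr rfl fun j _ => ?_
    rw [Fin.val_rev]
    congr 1
    omega
  constructor
  · intro l
    have e1 : ∑ j ∈ Finset.Iic l, revTuple L (radLayering K r L M) j
        = ∑ j ∈ Finset.range ((l : ℕ) + 1), dR (L - j) := hrev dR l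
    have e2 : ∑ j ∈ Finset.Iic l, socLayering K r L M j
        = ∑ j ∈ Finset.range ((l : ℕ) + 1), dS j := TruncHelp.sum_Iic L dS l
    rw [e1, e2]
    have hl := l.isLt
    have h1 := TruncHelp.sum_down_rev L dR R hRR ((l : ℕ) + 1) (by omega)
    have h2 := TruncHelp.sum_up dS S hSS ((l : ℕ) + 1)
    have h3 := hle ((l : ℕ) + 1) (by omega)
    omega
  · intro l
    have e1 : ∑ j ∈ Finset.Iic l, revTuple L (socLayering K r L M) j
        = ∑ j ∈ Finset.range ((l : ℕ) + 1), dS (L - j) := hrev dS l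
    have e2 : ∑ j ∈ Finset.Iic l, radLayering K r L M j
        = ∑ j ∈ Finset.range ((l : ℕ) + 1), dR j := TruncHelp.sum_Iic L dR l
    rw [e1, e2]
    have hl := l.isLt
    have h1 := TruncHelp.sum_up_rev L dS S hSS ((l : ℕ) + 1) (by omega)
    have h2 := TruncHelp.sum_down dR R hRR ((l : ℕ) + 1)
    have h3 := hle (L + 1 - ((l : ℕ) + 1)) (by omega)
    rw [show L + 1 - (L + 1 - ((l : ℕ) + 1)) = (l : ℕ) + 1 by omega] at h3
    omega
end
end

section
/- Let M be a finite-dimensional Λ-module with rad(M) = reverse(socseq(M)). Then the pair (rad(M), socseq(M)) is a minimal element of rad-soc(dim_K M): every finite-dimensional Λ-module N with dim_K N = dim_K M, rad(N) ≼ rad(M) and socseq(N) ≼ socseq(M) satisfies rad(N) = rad(M) and socseq(N) = socseq(M). -/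
noncomputable section

namespace S6
open Submodule

section alg
variable (K : Type) [Field K] (r L : ℕ)

abbrev S : Submodule K (TruncAlg K r L) := Submodule.span K (Set.range (gen K r L))

lemma mulR {K r L} [Field K] {P a b : Submodule K (TruncAlg K r L)} (h : a ≤ b) : P * a ≤ P * b :=
  mul_le_mul' le_rfl h
lemma mulL {K r L} [Field K] {P a b : Submodule K (TruncAlg K r L)} (h : a ≤ b) : a * P ≤ b * P :=
  mul_le_mul' h le_rfl

lemma mulTop (P : Submodule K (TruncAlg K r L)) :
    P * (⊤ : Submodule K (TruncAlg K r L)) * ⊤ ≤ P * ⊤ := by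
  rw [mul_assoc]; exact mulR le_top

lemma top_le : (⊤ : Submodule K (TruncAlg K r L)) ≤ 1 ⊔ S K r L * ⊤ := by
  have hA : (1 ⊔ S K r L * ⊤) * (1 ⊔ S K r L * ⊤) ≤ 1 ⊔ S K r L * ⊤ := by
    rw [Submodule.sup_mul, one_mul]
    refine sup_le le_rfl (le_trans ?_ le_sup_right)
    exact le_trans (mulR le_top) (mulTop K r L _)
  rintro x -
  obtain ⟨y, rfl⟩ := RingQuot.mkAlgHom_surjective K (TruncRel K r L) x
  induction y using FreeAlgebra.induction with
  | grade0 c =>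
    rw [AlgHom.commutes]
    exact Submodule.mem_sup_left (Submodule.mem_one.2 ⟨c, rfl⟩)
  | grade1 i =>
    apply Submodule.mem_sup_right
    have := Submodule.mul_mem_mul (M := S K r L) (N := ⊤)
      (Submodule.subset_span ⟨i, rfl⟩ : gen K r L i ∈ S K r L) (Submodule.mem_top (x := 1))
    rw [mul_one] at this
    exact this
  | mul a b ha hb =>
    rw [map_mul]
    exact hA (Submodule.mul_mem_mul ha hb)
  | add a b ha hb =>
    rw [map_add]
    exact add_mem ha hb

lemma top_mul_S : (⊤ : Submodule K (TruncAlg K r L)) * S K r L ≤ S K r L * ⊤ := by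
  calc _ ≤ (1 ⊔ S K r L * ⊤) * S K r L := mulL (top_le K r L)
    _ ≤ S K r L * ⊤ := by
      rw [Submodule.sup_mul, one_mul]
      refine sup_le ?_ ?_
      · conv_lhs => rw [← mul_one (S K r L)]
        exact mulR le_top
      · exact le_trans (mulR le_top) (mulTop K r L _)

lemma J_le : Jrad K r L ≤ S K r L * ⊤ :=
  le_trans (mulL (top_mul_S K r L)) (mulTop K r L _)

lemma le_J : S K r L * ⊤ ≤ Jrad K r L := by
  unfold Jrad
  apply mulL
  conv_lhs => rw [← one_mul (S K r L)]
  exact mulL le_top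

lemma J_pow_le (n : ℕ) : Jrad K r L ^ n ≤ S K r L ^ n * ⊤ := by
  induction n with
  | zero => simp
  | succ n ih =>
    rw [pow_succ, pow_succ]
    calc _ ≤ (S K r L ^ n * ⊤) * (S K r L * ⊤) := mul_le_mul' ih (J_le K r L)
      _ = S K r L ^ n * (⊤ * S K r L) * ⊤ := by simp only [mul_assoc]
      _ ≤ S K r L ^ n * (S K r L * ⊤) * ⊤ :=
        mulL (mulR (top_mul_S K r L))
      _ = (S K r L ^ n * S K r L) * ⊤ * ⊤ := by simp only [mul_assoc]
      _ ≤ _ := mulTop K r L _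

lemma S_pow : S K r L ^ (L + 1) = ⊥ := by
  rw [Submodule.span_pow, Submodule.span_eq_bot]
  intro x hx
  rw [Set.mem_pow] at hx
  obtain ⟨f, rfl⟩ := hx
  choose g hg using fun i => (f i).2
  have : TruncRel K r L ((List.ofFn fun j => FreeAlgebra.ι K (g j)).prod) 0 := ⟨⟨g, rfl⟩, rfl⟩
  have h2 := RingQuot.mkAlgHom_rel K this
  rw [map_zero, map_list_prod, List.map_ofFn] at h2
  refine Eq.trans ?_ h2
  congr 2
  funext i
  exact (hg i).symm

lemma J_pow : Jrad K r L ^ (L + 1) = ⊥ := by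
  have := J_pow_le K r L (L + 1)
  rw [S_pow, Submodule.bot_mul] at this
  exact le_bot_iff.1 this

lemma J_mul {a : TruncAlg K r L} (ha : a ∈ Jrad K r L) (b : TruncAlg K r L) :
    a * b ∈ Jrad K r L :=
  mulTop K r L _ (Submodule.mul_mem_mul ha Submodule.mem_top)

lemma decomp (a : TruncAlg K r L) : ∃ c : K, ∃ j ∈ Jrad K r L, a = algebraMap K _ c + j := by
  have := top_le K r L (Submodule.mem_top (x := a))
  obtain ⟨y, hy, z, hz, rfl⟩ := Submodule.mem_sup.1 this
  obtain ⟨c, rfl⟩ := Submodule.mem_one.1 hy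
  exact ⟨c, z, le_J K r L hz, rfl⟩

end alg

section mod
variable (K : Type) [Field K] (r L : ℕ) (N : Type) [AddCommGroup N] [Module K N]
  [Module (TruncAlg K r L) N] [IsScalarTower K (TruncAlg K r L) N]

lemma mem_socle (Q : Type) [AddCommGroup Q] [Module (TruncAlg K r L) Q] (x : Q)
    (hx : ∀ a ∈ Jrad K r L, a • x = 0) : x ∈ socle (TruncAlg K r L) Q := by
  by_cases h0 : x = 0
  · rw [h0]; exact zero_mem _
  have hs : IsSimpleModule (TruncAlg K r L) ↥(Submodule.span (TruncAlg K r L) {x}) := by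
    rw [isSimpleModule_iff_isAtom]
    refine ⟨by simpa using h0, fun b hb => ?_⟩
    by_contra hne
    obtain ⟨y, hy, hy0⟩ := Submodule.exists_mem_ne_zero_of_ne_bot hne
    obtain ⟨a, rfl⟩ := Submodule.mem_span_singleton.1 (hb.le hy)
    obtain ⟨c, j, hj, rfl⟩ := decomp K r L a
    rw [add_smul, hx j hj, add_zero] at hy hy0
    have hc : c ≠ 0 := by rintro rfl; simp at hy0
    have : x ∈ b := by
      have := b.smul_mem (algebraMap K (TruncAlg K r L) c⁻¹) hy
      rwa [smul_smul, ← map_mul, inv_mul_cancel₀ hc, map_one, one_smul] at this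
    exact hb.not_ge ((Submodule.span_singleton_le_iff_mem _ _).2 this)
  exact le_sSup (show _ ∈ {p : Submodule (TruncAlg K r L) Q | IsSimpleModule _ ↥p} from hs)
    (Submodule.mem_span_singleton_self x)

lemma smul_jpow (l : ℕ) (x : N) (hx : x ∈ jpow K r L N l) :
    ∀ a ∈ Jrad K r L, a • x ∈ jpow K r L N (l + 1) := by
  unfold jpow at hx
  induction hx using Submodule.span_induction with
  | mem x h =>
    obtain ⟨b, hb, m, rfl⟩ := h
    intro a ha
    rw [smul_smul]
    refine Submodule.subset_span ⟨a * b, ?_, m, rfl⟩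
    rw [pow_succ']
    exact Submodule.mul_mem_mul ha hb
  | zero => intro a _; rw [smul_zero]; exact zero_mem _
  | add x y _ _ h1 h2 => intro a ha; rw [smul_add]; exact add_mem (h1 a ha) (h2 a ha)
  | smul b x _ h => intro a ha; rw [smul_smul]; exact h _ (J_mul K r L ha b)

lemma jpow_zero : jpow K r L N 0 = ⊤ := by
  rw [eq_top_iff]
  rintro x -
  exact Submodule.subset_span ⟨1, by rw [pow_zero]; exact Submodule.one_le.1 le_rfl, x, by simp⟩

lemma jpow_last : jpow K r L N (L + 1) = ⊥ := by
  unfold jpow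
  rw [Submodule.span_eq_bot, J_pow]
  rintro x ⟨a, ha, m, rfl⟩
  rw [(Submodule.mem_bot K).1 ha, zero_smul]

lemma jpow_succ (l : ℕ) : jpow K r L N (l + 1) ≤ jpow K r L N l := by
  conv_lhs => unfold jpow
  rw [Submodule.span_le]
  rintro x ⟨a, ha, m, rfl⟩
  rw [pow_succ'] at ha
  induction ha using Submodule.mul_induction_on' with
  | mem_mul_mem b hb c hc =>
    rw [mul_smul]
    exact Submodule.smul_mem _ _ (Submodule.subset_span ⟨c, hc, m, rfl⟩)
  | add x _ y _ h1 h2 => rw [add_smul]; exact add_mem h1 h2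

lemma soc_succ (l : ℕ) :
    socSeries (TruncAlg K r L) N l ≤ socSeries (TruncAlg K r L) N (l + 1) := by
  intro x hx
  change (socSeries (TruncAlg K r L) N l).mkQ x ∈ socle (TruncAlg K r L) (N ⧸ socSeries (TruncAlg K r L) N l)
  rw [(Submodule.Quotient.mk_eq_zero _).2 hx |> fun h => (h : (socSeries (TruncAlg K r L) N l).mkQ x = 0)]
  exact zero_mem _

lemma jpow_le_soc (k l : ℕ) (h : k + l = L + 1) :
    jpow K r L N l ≤ socSeries (TruncAlg K r L) N k := by
  induction k generalizing l with
  | zero =>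
    obtain rfl : l = L + 1 := by omega
    rw [jpow_last]; exact bot_le
  | succ k ih =>
    intro x hx
    change (socSeries (TruncAlg K r L) N k).mkQ x ∈ socle (TruncAlg K r L) (N ⧸ socSeries (TruncAlg K r L) N k)
    refine mem_socle K r L _ _ fun a ha => ?_
    rw [← map_smul]
    exact (Submodule.Quotient.mk_eq_zero _).2 (ih (l + 1) (by omega) (smul_jpow K r L N l x hx a ha))

variable [FiniteDimensional K N]

lemma quotDim_add (p q : Submodule K N) (h : p ≤ q) :
    quotDim K N p q + Module.finrank K p = Module.finrank K q := by
  have := Submodule.finrank_quotient_add_finrank (Submodule.comap q.subtype p)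
  rw [(Submodule.comapSubtypeEquivOfLe h).finrank_eq] at this
  exact this

/-- dimension of jpow -/
def jd (l : ℕ) : ℕ := Module.finrank K ((jpow K r L N l).restrictScalars K)
/-- dimension of soc -/
def sd (l : ℕ) : ℕ := Module.finrank K ((socSeries (TruncAlg K r L) N l).restrictScalars K)

lemma rad_eq (l : Fin (L + 1)) :
    radLayering K r L N l + jd K r L N (l + 1) = jd K r L N l :=
  quotDim_add K N _ _ (jpow_succ K r L N l)

lemma soc_eq (l : Fin (L + 1)) :
    socLayering K r L N l + sd K r L N l = sd K r L N (l + 1) :=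
  quotDim_add K N _ _ (soc_succ K r L N l)

lemma jd_zero : jd K r L N 0 = Module.finrank K N := by
  unfold jd; rw [jpow_zero]; exact finrank_top K N

lemma jd_last : jd K r L N (L + 1) = 0 := by
  unfold jd; rw [jpow_last]; exact finrank_bot K N

lemma sd_zero : sd K r L N 0 = 0 := by
  exact finrank_bot K N

lemma jd_le_sd (k l : ℕ) (h : k + l = L + 1) : jd K r L N l ≤ sd K r L N k :=
  Submodule.finrank_mono (fun _ hx => jpow_le_soc K r L N k l h hx)

lemma sum_Iic (f : Fin (L + 1) → ℕ) (k : ℕ) (hk : k < L + 1) :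
    ∑ j ∈ Finset.Iic (⟨k, hk⟩ : Fin (L + 1)), f j =
      ∑ j ∈ Finset.range (k + 1), if h : j < L + 1 then f ⟨j, h⟩ else 0 := by
  refine Finset.sum_bij (fun j _ => j.1) ?_ ?_ ?_ ?_
  · intro a ha; simp [Fin.le_def] at ha ⊢; omega
  · intro a _ b _ h; exact Fin.ext h
  · intro b hb
    simp at hb
    exact ⟨⟨b, by omega⟩, by simp [Fin.le_def]; omega, rfl⟩
  · intro a _; rw [dif_pos a.2]

lemma sum_rad (k : ℕ) (hk : k < L + 1) :
    ∑ j ∈ Finset.Iic (⟨k, hk⟩ : Fin (L + 1)), radLayering K r L N j + jd K r L N (k + 1) =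
      Module.finrank K N := by
  rw [sum_Iic]
  induction k with
  | zero =>
    have := rad_eq K r L N ⟨0, hk⟩
    have h0 := jd_zero K r L N
    simp at this ⊢; omega
  | succ k ih =>
    have := rad_eq K r L N ⟨k + 1, hk⟩
    have h0 := ih (by omega)
    rw [Finset.sum_range_succ, dif_pos hk]
    simp only at this; omega

lemma sum_soc (k : ℕ) (hk : k < L + 1) :
    ∑ j ∈ Finset.Iic (⟨k, hk⟩ : Fin (L + 1)), socLayering K r L N j = sd K r L N (k + 1) := by
  rw [sum_Iic]
  induction k with
  | zero =>
    have := soc_eq K r L N ⟨0, hk⟩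
    have h0 := sd_zero K r L N
    simp at this ⊢; omega
  | succ k ih =>
    have := soc_eq K r L N ⟨k + 1, hk⟩
    have h0 := ih (by omega)
    rw [Finset.sum_range_succ, dif_pos hk]
    simp only at this; omega

lemma sd_eq_jd (h : radLayering K r L N = revTuple L (socLayering K r L N)) (k l : ℕ)
    (hkl : k + l = L + 1) : sd K r L N k = jd K r L N l := by
  induction k generalizing l with
  | zero =>
    obtain rfl : l = L + 1 := by omega
    rw [sd_zero, jd_last]
  | succ k ih =>
    have h1 := soc_eq K r L N ⟨k, by omega⟩
    have h2 := rad_eq K r L N ⟨l, by omega⟩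
    have h3 := congrFun h ⟨l, by omega⟩
    have h4 : (⟨l, by omega⟩ : Fin (L + 1)).rev = ⟨k, by omega⟩ := by
      ext; simp [Fin.val_rev]; omega
    rw [revTuple, h4] at h3
    have := ih (l + 1) (by omega)
    simp only at h1 h2; omega

end mod
end S6

/-- If `rad M = reverse (socseq M)`, then `(rad M, socseq M)` is a minimal
element of `rad-soc(dim_K M)`. -/
theorem stmt6 (K : Type) [Field K] [IsAlgClosed K] (r L : ℕ) (hr : 0 < r) (hL : 0 < L)
    (M : Type) [AddCommGroup M] [Module K M] [Module (TruncAlg K r L) M]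
    [IsScalarTower K (TruncAlg K r L) M] [FiniteDimensional K M]
    (h : radLayering K r L M = revTuple L (socLayering K r L M)) :
    ∀ (N : Type) (_ : AddCommGroup N) (_ : Module K N)
        (_ : Module (TruncAlg K r L) N) (_ : IsScalarTower K (TruncAlg K r L) N)
        (_ : FiniteDimensional K N),
      Module.finrank K N = Module.finrank K M →
      DomLE L (radLayering K r L N) (radLayering K r L M) →
      DomLE L (socLayering K r L N) (socLayering K r L M) →
      radLayering K r L N = radLayering K r L M ∧
        socLayering K r L N = socLayering K r L M := by
  intro N _ _ _ _ _ hd hR hS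
  have key : ∀ k l : ℕ, k + l = L + 1 → S6.jd K r L N l = S6.jd K r L M l ∧
      S6.sd K r L N k = S6.sd K r L M k := by
    intro k l hkl
    have e1 := S6.sd_eq_jd K r L M h k l hkl
    have e2 := S6.jd_le_sd K r L N k l hkl
    have e3 : S6.sd K r L N k ≤ S6.sd K r L M k := by
      rcases k with _ | k
      · rw [S6.sd_zero, S6.sd_zero]
      · have := hS ⟨k, by omega⟩
        rwa [S6.sum_soc, S6.sum_soc] at this
    have e4 : S6.jd K r L M l ≤ S6.jd K r L N l := by
      rcases l with _ | l
      · rw [S6.jd_zero, S6.jd_zero, hd]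
      · rcases Nat.lt_or_ge l (L + 1) with hl | hl
        · have := hR ⟨l, hl⟩
          have a1 := S6.sum_rad K r L N l hl
          have a2 := S6.sum_rad K r L M l hl
          omega
        · omega
    omega
  constructor
  · funext l
    have a1 := S6.rad_eq K r L N l
    have a2 := S6.rad_eq K r L M l
    have b1 := (key (L + 1 - l) l (by omega)).1
    have b2 := (key (L - l) (l + 1) (by omega)).1
    omega
  · funext l
    have a1 := S6.soc_eq K r L N l
    have a2 := S6.soc_eq K r L M l
    have b1 := (key l (L + 1 - l) (by omega)).2
    have b2 := (key (l + 1) (L - l) (by omega)).2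
    omega
end
end
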